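/- Let (A(n))_{n∈ℕ} be a sequence of i.i.d. random d×d matrices with entries in ℝ_max, almost surely having at least one finite entry on each row, such that max{|A_{ij}(0)| : A_{ij}(0) ≠ -∞} is integrable. Then (1/n)·x(n,0) converges almost surely if and only if for every strongly connected component c of 𝒢(A), the submatrix A^{{c}} of A(0) indexed by H_c almost surely has at least one finite entry on each row. In that case, for every i ∈ {1,…,d}, lim_n (1/n)·x_i(n,0) = max{ γ^{(c)} : c a strongly connected component with i → c } almost surely. -/

import Mathlib

open Filter MeasureTheory ProbabilityTheory Topology

noncomputable section

/-- Max-plus action of a `d × d` matrix over `ℝ_max = ℝ ∪ {-∞}` (encoded as `EReal`,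
with `⊤` never used) on a vector: `(A ⊗ v) i = max_j (A i j + v j)`. -/
def mpVec {d : ℕ} (A : Fin d → Fin d → EReal) (v : Fin d → EReal) : Fin d → EReal :=
  fun i => ⨆ j, A i j + v j

/-- `appProd n f v = f 0 ⊗ f 1 ⊗ ⋯ ⊗ f (n-1) ⊗ v` in the max-plus algebra. -/
def appProd {d : ℕ} : ℕ → (ℕ → Fin d → Fin d → EReal) → (Fin d → EReal) → Fin d → EReal
  | 0, _, v => v
  | n + 1, f, v => mpVec (f 0) (appProd n (fun k => f (k + 1)) v)

/-- `xvec f n = f (n-1) ⊗ ⋯ ⊗ f 0 ⊗ 0`; with `f m = A(m)` this is `x(n, 0)`. -/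
def xvec {d : ℕ} (f : ℕ → Fin d → Fin d → EReal) : ℕ → Fin d → EReal
  | 0 => fun _ => 0
  | n + 1 => mpVec (f n) (xvec f n)

/-- `lvec n f = f 0 ⊗ f 1 ⊗ ⋯ ⊗ f (n-1) ⊗ 0`; with `f k = A(-(k+1))` this is `y(n, 0)`. -/
def lvec {d : ℕ} (n : ℕ) (f : ℕ → Fin d → Fin d → EReal) : Fin d → EReal :=
  appProd n f (fun _ => 0)

/-- Multiplication of an extended real by `1/n`. -/
def mpScale (n : ℕ) (x : EReal) : EReal := (((n : ℝ)⁻¹ : ℝ) : EReal) * x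

open Classical in
/-- Restriction of a matrix to the indices in `c`: entries outside `c × c` are `-∞`. -/
def mpRestrict {d : ℕ} (c : Set (Fin d)) (M : Fin d → Fin d → EReal) : Fin d → Fin d → EReal :=
  fun i j => if i ∈ c ∧ j ∈ c then M i j else ⊥

/-- Arc relation of the graph `𝒢(A)` of a random matrix `A`:
`(i,j)` is an arc iff `A ω i j ≠ -∞` with positive probability. -/
def arcRel {Ω : Type*} [MeasurableSpace Ω] (μ : Measure Ω) {d : ℕ}
    (A : Ω → Fin d → Fin d → EReal) (i j : Fin d) : Prop :=
  μ {ω | A ω i j ≠ ⊥} ≠ 0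

/-- `c` is a strongly connected component of the graph with arc relation `r`
(the mutual-reachability class of some node; nodes on no circuit are alone in their class). -/
def IsSCC {d : ℕ} (r : Fin d → Fin d → Prop) (c : Set (Fin d)) : Prop :=
  ∃ i, c = {j | Relation.ReflTransGen r i j ∧ Relation.ReflTransGen r j i}

/-- `i → c` : the node `i` reaches the component `c`. -/
def nodeReach {d : ℕ} (r : Fin d → Fin d → Prop) (i : Fin d) (c : Set (Fin d)) : Prop :=
  ∃ j ∈ c, Relation.ReflTransGen r i j

/-- `c → c'` : the component `c` reaches the component `c'`. -/
def sccReach {d : ℕ} (r : Fin d → Fin d → Prop) (c c' : Set (Fin d)) : Prop :=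
  ∃ i ∈ c, nodeReach r i c'

/-- `γ^{[c]} = max { γ^{(c')} : c → c' }`, where `γ` assigns to each s.c.c. its
maximal Lyapunov exponent. -/
def gammaBrack {d : ℕ} (r : Fin d → Fin d → Prop) (γ : Set (Fin d) → EReal)
    (c : Set (Fin d)) : EReal :=
  ⨆ c', ⨆ (_ : IsSCC r c' ∧ sccReach r c c'), γ c'

/-- The set of nodes `H_c = {c}` : nodes `i` with `c → i → c̃` for some s.c.c. `c̃`
realizing `γ^{(c̃)} = γ^{[c]}`. -/
def Hset {d : ℕ} (r : Fin d → Fin d → Prop) (γ : Set (Fin d) → EReal)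
    (c : Set (Fin d)) : Set (Fin d) :=
  {i | ∃ ct, IsSCC r ct ∧ (∃ j ∈ c, Relation.ReflTransGen r j i) ∧ nodeReach r i ct ∧
    γ ct = gammaBrack r γ c}

/-- `max { γ^{(c)} : c s.c.c. with i → c }`. -/
def limFormula {d : ℕ} (r : Fin d → Fin d → Prop) (γ : Set (Fin d) → EReal) (i : Fin d) : EReal :=
  ⨆ c, ⨆ (_ : IsSCC r c ∧ nodeReach r i c), γ c

/-!
The rate `γ^{[i]} = max {γ^{(c)} : i → c}` of a node is an upper bound for the growth of its orbit.
This goes by induction along the graph: during a block of `N` steps a path either stays in the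
component of `i`, where the truncated maximum of the restricted products has mean at most
`N γ^{(c)}` up to a small error, or it enters nodes of smaller reach.

For the lower bound restrict to the set `H` of nodes reachable from `i` with the same rate as `i`.
Every node of `H` reaches within `H` a component of that rate, so with probability bounded below its
orbit is fast at time `n`; by a zero-one law, almost surely each node of `H` starts a path whose
slope stays close to the rate at some later time. Since every row of the restricted matrix has a
finite entry, a path can always be continued inside `H`, so one can jump greedily along such fast
paths and lose only an integrable amount at nodes where the next one is not found quickly. Hence the
minimum over `H` of the orbit has mean close to `N` times the rate, and the law of large numbers for
blocks gives almost sure growth.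

Conversely, if a row of `H` only sees nodes outside of `H` with positive probability, then this
happens infinitely often, and then the orbit of that node grows no faster than those of nodes of
strictly smaller rate. Its limit would be smaller than its rate, although with probability bounded
below its orbit is fast.
-/

section Probability

variable {Ω : Type*} [MeasurableSpace Ω] {μ : Measure Ω}

theorem tendsto_measure_zero_of_ae_eventually_notMem [IsFiniteMeasure μ] {E : ℕ → Set Ω}
    (hE : ∀ n, MeasurableSet (E n)) (h : ∀ᵐ ω ∂μ, ∀ᶠ n in atTop, ω ∉ E n) :
    Tendsto (fun n => μ (E n)) atTop (𝓝 0) := by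
  have hlim := tendsto_measure_of_ae_tendsto_indicator_of_isFiniteMeasure atTop (μ := μ)
    MeasurableSet.empty hE (h.mono fun ω hω => hω.mono fun n hn => by simpa using hn)
  simpa using hlim

theorem eventually_lt_integral_of_ae_eventually_le [IsProbabilityMeasure μ] {G : ℕ → Ω → ℝ}
    {b c : ℝ} (hint : ∀ n, Integrable (G n) μ) (hnonneg : ∀ n, 0 ≤ᵐ[μ] G n)
    (hc : ∀ᵐ ω ∂μ, ∀ᶠ n in atTop, c ≤ G n ω) (hbc : b < c) :
    ∀ᶠ n in atTop, b < ∫ ω, G n ω ∂μ := by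
  rcases lt_or_ge b 0 with hb | hb
  · exact Eventually.of_forall fun n => hb.trans_le (integral_nonneg_of_ae (hnonneg n))
  have hliminf : ENNReal.ofReal c ≤ liminf (fun n => ∫⁻ ω, ENNReal.ofReal (G n ω) ∂μ) atTop := by
    calc ENNReal.ofReal c = ∫⁻ _, ENNReal.ofReal c ∂μ := by simp
      _ ≤ ∫⁻ ω, liminf (fun n => ENNReal.ofReal (G n ω)) atTop ∂μ :=
        lintegral_mono_ae <| hc.mono fun ω hω =>
          le_liminf_of_le (h := hω.mono fun n hn => ENNReal.ofReal_le_ofReal hn)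
      _ ≤ _ := lintegral_liminf_le' fun n => (hint n).aemeasurable.ennreal_ofReal
  filter_upwards [eventually_lt_of_lt_liminf
    (((ENNReal.ofReal_lt_ofReal_iff (hb.trans_lt hbc)).2 hbc).trans_le hliminf)] with n hn
  rw [← ofReal_integral_eq_lintegral_ofReal (hint n) (hnonneg n)] at hn
  exact ENNReal.lt_ofReal_iff_toReal_lt ENNReal.ofReal_ne_top |>.1 hn |>.trans_eq' (by simp [hb])

/- Approximating `Sᶜ` by some `B ∈ 𝒜`, the overlap `S ∩ B` is negligible although it carries
a fraction `q` of the mass of `B`. -/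
theorem measure_compl_eq_zero_of_forall_mem_isSetRing {α : Type*} [mα : MeasurableSpace α]
    {P : Measure α} [IsFiniteMeasure P] {𝒜 : Set (Set α)} (h𝒜 : IsSetRing 𝒜)
    (hcover : ∃ D : Set (Set α), D.Countable ∧ D ⊆ 𝒜 ∧ P (⋃₀ D)ᶜ = 0)
    (hgen : mα = MeasurableSpace.generateFrom 𝒜) {S : Set α} (hS : MeasurableSet S) {q : ℝ}
    (hq : 0 < q) (hle : ∀ B ∈ 𝒜, q * P.real B ≤ P.real (S ∩ B)) : P Sᶜ = 0 := by
  rw [← measureReal_eq_zero_iff]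
  refine le_antisymm (le_of_forall_pos_le_add fun ε hε => ?_) measureReal_nonneg
  set δ := ε * q / (1 + q) with hδ
  have hδ0 : 0 < δ := by positivity
  obtain ⟨B, hB, hBS⟩ := exists_measure_symmDiff_lt_of_generateFrom_isSetRing (μ := P) h𝒜 hcover
    hgen hS.compl (ENNReal.ofReal_pos.2 hδ0)
  have happrox : P.real (symmDiff B Sᶜ) ≤ δ := ENNReal.toReal_le_of_le_ofReal hδ0.le hBS.le
  have hoverlap : P.real (S ∩ B) ≤ δ :=
    (measureReal_mono fun x hx => Or.inl ⟨hx.2, fun h => h hx.1⟩).trans happrox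
  have hcompl : P.real Sᶜ ≤ P.real B + δ := by
    refine (measureReal_mono (s₂ := B ∪ symmDiff B Sᶜ) fun x hx => ?_).trans
      ((measureReal_union_le _ _).trans (by gcongr))
    by_cases hxB : x ∈ B
    · exact Or.inl hxB
    · exact Or.inr (Or.inr ⟨hx, hxB⟩)
  have hB' : P.real B ≤ δ / q := (le_div_iff₀' hq).2 ((hle B hB).trans hoverlap)
  have hsum : δ / q + δ = ε := by rw [hδ]; field_simp
  linarith

end Probability

/-- The sequence of i.i.d. random variables `X 0, X 1, …`; its path at `ω` is `(X · ω)`. -/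
structure IsIID {Ω E : Type*} [MeasurableSpace Ω] [MeasurableSpace E] (X : ℕ → Ω → E)
    (μ : Measure Ω) : Prop where
  measurable : ∀ n, Measurable (X n)
  indep : iIndepFun X μ
  identDistrib : ∀ n, IdentDistrib (X n) (X 0) μ μ

/-- The sequence `f t, f (t + 1), …`. -/
def seqShift {E : Type*} (t : ℕ) (f : ℕ → E) : ℕ → E := fun n => f (n + t)

theorem measurable_seqShift {E : Type*} [MeasurableSpace E] (t : ℕ) :
    Measurable (seqShift t : (ℕ → E) → ℕ → E) :=
  measurable_pi_iff.2 fun n => measurable_pi_apply (n + t)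

theorem seqShift_seqShift {E : Type*} (s t : ℕ) (f : ℕ → E) :
    seqShift s (seqShift t f) = seqShift (s + t) f := by
  funext n; simp [seqShift, add_assoc]

theorem seqShift_zero {E : Type*} (f : ℕ → E) : seqShift 0 f = f := rfl

theorem dependsOn_seqShift {E : Type*} (t : ℕ) :
    DependsOn (seqShift t : (ℕ → E) → ℕ → E) (Set.Ici t) := fun _ _ hfg =>
  funext fun n => hfg _ (Nat.le_add_left t n)

theorem dependsOn_comp_seqShift {E β : Type*} {F : (ℕ → E) → β} {N : ℕ}
    (hF : DependsOn F (Set.Iio N)) (t : ℕ) :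
    DependsOn (fun f => F (seqShift t f)) (Set.Ico t (t + N)) := fun _ _ hfg =>
  hF fun n hn => hfg _ ⟨Nat.le_add_left t n, by have := Set.mem_Iio.1 hn; omega⟩

theorem measurable_path_of_dependsOn {Ω E β : Type*} [MeasurableSpace E] [MeasurableSpace β]
    {X : ℕ → Ω → E} {F : (ℕ → E) → β} {S : Set ℕ} (hF : Measurable F) (hS : DependsOn F S) :
    Measurable[⨆ n ∈ S, MeasurableSpace.comap (X n) inferInstance] fun ω => F (X · ω) := by
  classical
  rcases isEmpty_or_nonempty Ω with _ | ⟨⟨ω₀⟩⟩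
  · exact fun s _ => by convert MeasurableSet.empty; exact Subsingleton.elim _ _
  have hfreeze : (fun ω => F (X · ω)) = F ∘ fun ω n => if n ∈ S then X n ω else X n ω₀ := by
    funext ω
    exact hS fun n hn => by simp [hn]
  rw [hfreeze]
  refine hF.comp (@measurable_pi_lambda _ _ _ (_) _ _ fun n => ?_)
  by_cases hn : n ∈ S
  · simp only [hn, if_true]
    exact Measurable.mono (comap_measurable (X n)) (le_iSup₂_of_le n hn le_rfl) le_rfl
  · simp only [hn, if_false]
    exact @measurable_const _ _ _ (_) _

namespace IsIID

variable {Ω E : Type*} [MeasurableSpace Ω] [MeasurableSpace E] {X : ℕ → Ω → E}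
  {μ : Measure Ω}

theorem comp (h : IsIID X μ) {E' : Type*} [MeasurableSpace E'] {φ : E → E'}
    (hφ : Measurable φ) : IsIID (fun n ω => φ (X n ω)) μ where
  measurable n := hφ.comp (h.measurable n)
  indep := h.indep.comp (fun _ => φ) (fun _ => hφ)
  identDistrib n := (h.identDistrib n).comp hφ

theorem measurable_path (h : IsIID X μ) : Measurable fun ω => (X · ω) :=
  measurable_pi_iff.2 h.measurable

theorem measure_mem_eq (h : IsIID X μ) {S : Set E} (hS : MeasurableSet S) (n : ℕ) :
    μ {ω | X n ω ∈ S} = μ {ω | X 0 ω ∈ S} :=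
  (h.identDistrib n).measure_mem_eq hS

theorem ae_forall_mem (h : IsIID X μ) {S : Set E} (hS : MeasurableSet S)
    (h0 : ∀ᵐ ω ∂μ, X 0 ω ∈ S) : ∀ᵐ ω ∂μ, ∀ n, X n ω ∈ S :=
  ae_all_iff.2 fun n => (h.identDistrib n).symm.ae_snd hS h0

theorem ae_frequently_mem (h : IsIID X μ) {S : Set E} (hS : MeasurableSet S)
    (hpos : μ {ω | X 0 ω ∈ S} ≠ 0) : ∀ᵐ ω ∂μ, ∃ᶠ n in atTop, X n ω ∈ S := by
  have := h.indep.isProbabilityMeasure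
  have hSn : ∀ n, MeasurableSet (X n ⁻¹' S) := fun n => h.measurable n hS
  have hindep : iIndepSet (fun n => X n ⁻¹' S) μ :=
    (iIndepSet_iff_meas_biInter hSn).2 fun s =>
      h.indep.measure_inter_preimage_eq_mul s fun _ _ => hS
  have hlimsup : μ (limsup (fun n => X n ⁻¹' S) atTop) = 1 :=
    measure_limsup_eq_one hSn hindep <|
      (tsum_congr fun n => h.measure_mem_eq hS n).trans (ENNReal.tsum_const_eq_top_of_ne_zero hpos)
  filter_upwards [(mem_ae_iff_prob_eq_one (MeasurableSet.measurableSet_limsup hSn)).2 hlimsup]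
    with ω hω
  exact mem_limsup_iff_frequently_mem.1 hω

theorem identDistrib_reindex (h : IsIID X μ) {σ : ℕ → ℕ} (hσ : Function.Injective σ) :
    IdentDistrib (fun ω n => X (σ n) ω) (fun ω => (X · ω)) μ μ where
  aemeasurable_fst := (measurable_pi_iff.2 fun n => h.measurable _).aemeasurable
  aemeasurable_snd := h.measurable_path.aemeasurable
  map_eq := by
    have := h.indep.isProbabilityMeasure
    rw [iIndepFun.map_fun_eq_infinitePi_map (X := fun n => X (σ n)) (fun n => h.measurable _)
      (h.indep.precomp hσ), iIndepFun.map_fun_eq_infinitePi_map h.measurable h.indep]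
    simp only [(h.identDistrib _).map_eq]

theorem identDistrib_shift (h : IsIID X μ) (t : ℕ) :
    IdentDistrib (fun ω => seqShift t (X · ω)) (fun ω => (X · ω)) μ μ :=
  h.identDistrib_reindex (add_left_injective t)

theorem indepFun_of_disjoint (h : IsIID X μ) {β β' : Type*} [MeasurableSpace β]
    [MeasurableSpace β'] {F : (ℕ → E) → β} {G : (ℕ → E) → β'} (hF : Measurable F)
    (hG : Measurable G) {S T : Set ℕ} (hFS : DependsOn F S) (hGT : DependsOn G T)
    (hST : Disjoint S T) : IndepFun (fun ω => F (X · ω)) (fun ω => G (X · ω)) μ :=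
  indep_of_indep_of_le_left (indep_of_indep_of_le_right
    (indep_iSup_of_disjoint (fun n => (h.measurable n).comap_le) h.indep hST)
    (measurable_path_of_dependsOn hG hGT).comap_le) (measurable_path_of_dependsOn hF hFS).comap_le

theorem block_strong_law (h : IsIID X μ) {N : ℕ} {F : (ℕ → E) → ℝ} (hF : Measurable F)
    (hN : DependsOn F (Set.Iio N)) (hint : Integrable (fun ω => F (X · ω)) μ) :
    ∀ᵐ ω ∂μ, Tendsto
      (fun k : ℕ => (∑ l ∈ Finset.range k, F (seqShift (l * N) (X · ω))) / k) atTop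
      (𝓝 (∫ ω, F (X · ω) ∂μ)) := by
  have hlaw := strong_law_ae_real (μ := μ) (fun l ω => F (seqShift (l * N) (X · ω)))
    (by simpa [seqShift_zero] using hint) (fun k l hkl => ?_)
    fun l => ((h.identDistrib_shift _).trans (h.identDistrib_shift _).symm).comp hF
  · simpa [seqShift_zero] using hlaw
  · refine h.indepFun_of_disjoint (hF.comp (measurable_seqShift _))
      (hF.comp (measurable_seqShift _)) (dependsOn_comp_seqShift hN _)
      (dependsOn_comp_seqShift hN _) ?_
    simp only [← Nat.succ_mul]
    exact (Monotone.pairwise_disjoint_on_Ico_succ (f := (· * N)) fun a b hab =>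
      Nat.mul_le_mul_right N hab) hkl

theorem measureReal_inter_shift (h : IsIID X μ) {t : ℕ} {B C : Set (ℕ → E)}
    (hB : MeasurableSet B) (hBt : DependsOn (· ∈ B) (Set.Iio t)) (hC : MeasurableSet C) :
    μ.real {ω | (X · ω) ∈ B ∧ seqShift t (X · ω) ∈ C} =
      μ.real {ω | (X · ω) ∈ B} * μ.real {ω | (X · ω) ∈ C} := by
  have hindep := h.indepFun_of_disjoint (measurable_mem.2 hB) (measurable_seqShift t) hBt
    (dependsOn_seqShift t) (Set.Iio_disjoint_Ici le_rfl)
  have hprod := hindep.measure_inter_preimage_eq_mul {True} C MeasurableSet.of_discrete hC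
  have hshift := (h.identDistrib_shift t).measure_mem_eq hC
  simp only [Measure.real, ← ENNReal.toReal_mul, Set.preimage, Set.mem_singleton_iff,
    eq_iff_iff, iff_true] at hprod hshift ⊢
  rw [← hshift, ← hprod]
  rfl

theorem ae_path_mem (h : IsIID X μ) {S : Set (ℕ → E)} (hS : MeasurableSet S) {q : ℝ} (hq : 0 < q)
    (hle : ∀ t, ∀ B : Set (ℕ → E), MeasurableSet B → DependsOn (· ∈ B) (Set.Iio t) →
      q * μ.real {ω | (X · ω) ∈ B} ≤ μ.real {ω | (X · ω) ∈ S ∩ B}) :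
    ∀ᵐ ω ∂μ, (X · ω) ∈ S := by
  have := h.indep.isProbabilityMeasure
  have := Measure.isProbabilityMeasure_map (μ := μ) h.measurable_path.aemeasurable
  suffices hcompl : μ.map (fun ω => (X · ω)) Sᶜ = 0 from
    (ae_map_iff (p := (· ∈ S)) h.measurable_path.aemeasurable hS).1 (mem_ae_iff.2 hcompl)
  refine measure_compl_eq_zero_of_forall_mem_isSetRing
    (isSetRing_measurableCylinders (α := fun _ : ℕ => E))
    ⟨{Set.univ}, Set.countable_singleton _, by
      simpa using univ_mem_measurableCylinders (fun _ : ℕ => E), by simp⟩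
    generateFrom_measurableCylinders.symm hS hq fun B hB => ?_
  have hBm : MeasurableSet B := MeasurableSet.of_mem_measurableCylinders hB
  rw [map_measureReal_apply h.measurable_path hBm,
    map_measureReal_apply h.measurable_path (hS.inter hBm)]
  obtain ⟨s, D, -, rfl⟩ := (mem_measurableCylinders _).1 hB
  refine hle (s.sup id + 1) _ hBm fun f g hfg => ?_
  have hrestrict : s.restrict f = s.restrict g := funext fun i =>
    hfg _ (Nat.lt_succ_of_le (Finset.le_sup (f := id) i.2))
  simp only [cylinder, Set.mem_preimage, hrestrict]

end IsIID

section LinearGrowth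

/-- The sequence `u` is bounded above by `α * n` up to an additive constant. -/
def GrowsAtMost (u : ℕ → EReal) (α : ℝ) : Prop :=
  ∃ C : ℝ, ∀ n : ℕ, u n ≤ ((α * n + C : ℝ) : EReal)

/-- The sequence `u` is bounded below by `α * n` up to an additive constant. -/
def GrowsAtLeast (u : ℕ → EReal) (α : ℝ) : Prop :=
  ∃ C : ℝ, ∀ n : ℕ, ((α * n - C : ℝ) : EReal) ≤ u n

theorem eventually_add_le_mul {α β : ℝ} (h : α < β) (C : ℝ) :
    ∀ᶠ n : ℕ in atTop, α * n + C ≤ β * n := by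
  filter_upwards [tendsto_natCast_atTop_atTop.eventually_ge_atTop (C / (β - α))] with n hn
  rw [div_le_iff₀ (sub_pos.2 h)] at hn
  linarith

theorem GrowsAtMost.eventually_le {u : ℕ → EReal} {α β : ℝ} (h : GrowsAtMost u α) (hαβ : α < β) :
    ∀ᶠ n : ℕ in atTop, u n ≤ ((β * n : ℝ) : EReal) := by
  obtain ⟨C, hC⟩ := h
  filter_upwards [eventually_add_le_mul hαβ C] with n hn
  exact (hC n).trans (EReal.coe_le_coe_iff.2 hn)

theorem GrowsAtLeast.eventually_ge {u : ℕ → EReal} {α β : ℝ} (h : GrowsAtLeast u α)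
    (hβα : β < α) : ∀ᶠ n : ℕ in atTop, ((β * n : ℝ) : EReal) ≤ u n := by
  obtain ⟨C, hC⟩ := h
  filter_upwards [eventually_add_le_mul hβα C] with n hn
  exact (EReal.coe_le_coe_iff.2 (le_sub_iff_add_le.2 hn)).trans (hC n)

theorem exists_forall_le_of_growsAtMost {ι : Type*} [Finite ι] {u : ι → ℕ → EReal} {α : ℝ}
    (h : ∀ i, GrowsAtMost (u i) α) : ∃ C : ℝ, ∀ i, ∀ n : ℕ, u i n ≤ ((α * n + C : ℝ) : EReal) := by
  choose C hC using h
  obtain ⟨B, hB⟩ := (Set.finite_range C).bddAbove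
  exact ⟨B, fun i n => (hC i n).trans
    (EReal.coe_le_coe_iff.2 (by linarith [hB (Set.mem_range_self i)]))⟩

theorem mpScale_le_coe_iff {n : ℕ} (hn : 0 < n) {x : EReal} {a : ℝ} :
    mpScale n x ≤ a ↔ x ≤ ((a * n : ℝ) : EReal) := by
  have hn' : (0 : ℝ) < n := Nat.cast_pos.2 hn
  unfold mpScale
  induction x with
  | bot => simp [EReal.coe_mul_bot_of_pos (inv_pos.2 hn')]
  | top =>
    rw [EReal.coe_mul_top_of_pos (inv_pos.2 hn')]
    simp only [top_le_iff, EReal.coe_ne_top]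
  | coe x =>
    rw [← EReal.coe_mul, EReal.coe_le_coe_iff, EReal.coe_le_coe_iff, inv_mul_le_iff₀ hn', mul_comm]

theorem coe_le_mpScale_iff {n : ℕ} (hn : 0 < n) {x : EReal} {a : ℝ} :
    (a : EReal) ≤ mpScale n x ↔ ((a * n : ℝ) : EReal) ≤ x := by
  have hn' : (0 : ℝ) < n := Nat.cast_pos.2 hn
  unfold mpScale
  induction x with
  | bot =>
    rw [EReal.coe_mul_bot_of_pos (inv_pos.2 hn')]
    simp only [le_bot_iff, EReal.coe_ne_bot]
  | top => simp [EReal.coe_mul_top_of_pos (inv_pos.2 hn')]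
  | coe x =>
    rw [← EReal.coe_mul, EReal.coe_le_coe_iff, EReal.coe_le_coe_iff, le_inv_mul_iff₀ hn', mul_comm]

theorem eventually_le_of_tendsto_mpScale {u : ℕ → EReal} {l : EReal}
    (h : Tendsto (fun n => mpScale n (u n)) atTop (𝓝 l)) {a : ℝ} (ha : l < a) :
    ∀ᶠ n : ℕ in atTop, u n ≤ ((a * n : ℝ) : EReal) := by
  filter_upwards [h.eventually_lt_const ha, eventually_gt_atTop 0] with n hn hpos
  exact (mpScale_le_coe_iff hpos).1 hn.le

theorem eventually_ge_of_tendsto_mpScale {u : ℕ → EReal} {l : EReal}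
    (h : Tendsto (fun n => mpScale n (u n)) atTop (𝓝 l)) {a : ℝ} (ha : (a : EReal) < l) :
    ∀ᶠ n : ℕ in atTop, ((a * n : ℝ) : EReal) ≤ u n := by
  filter_upwards [h.eventually_const_lt ha, eventually_gt_atTop 0] with n hn hpos
  exact (coe_le_mpScale_iff hpos).1 hn.le

theorem tendsto_mpScale_of_growth {u : ℕ → EReal} {l : EReal}
    (hupper : ∀ q : ℚ, l < ((q : ℝ) : EReal) → GrowsAtMost u q)
    (hlower : ∀ q : ℚ, ((q : ℝ) : EReal) < l → GrowsAtLeast u q) :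
    Tendsto (fun n => mpScale n (u n)) atTop (𝓝 l) := by
  refine tendsto_order.2 ⟨fun b hb => ?_, fun b hb => ?_⟩
  · obtain ⟨a, hba, hal⟩ := EReal.lt_iff_exists_real_btwn.1 hb
    obtain ⟨q, haq, hql⟩ := EReal.lt_iff_exists_rat_btwn.1 hal
    filter_upwards [(hlower q hql).eventually_ge (EReal.coe_lt_coe_iff.1 haq),
      eventually_gt_atTop 0] with n hn hpos
    exact hba.trans_le ((coe_le_mpScale_iff hpos).2 hn)
  · obtain ⟨a, hla, hab⟩ := EReal.lt_iff_exists_real_btwn.1 hb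
    obtain ⟨q, hlq, hqa⟩ := EReal.lt_iff_exists_rat_btwn.1 hla
    filter_upwards [(hupper q hlq).eventually_le (EReal.coe_lt_coe_iff.1 hqa),
      eventually_gt_atTop 0] with n hn hpos
    exact ((mpScale_le_coe_iff hpos).2 hn).trans_lt hab

theorem exists_le_mul_add_of_eventually {u : ℕ → ℝ} {a : ℝ}
    (h : ∀ᶠ n : ℕ in atTop, u n ≤ a * n) : ∃ C, ∀ n : ℕ, u n ≤ a * n + C := by
  have hbdd : IsBoundedUnder (· ≤ ·) atTop fun n : ℕ => u n - a * n :=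
    ⟨0, eventually_map.2 (h.mono fun n hn => sub_nonpos.2 hn)⟩
  obtain ⟨C, hC⟩ := hbdd.bddAbove_range
  exact ⟨C, fun n => sub_le_iff_le_add'.1 (hC (Set.mem_range_self n))⟩

theorem exists_le_mul_add_of_tendsto_div {u : ℕ → ℝ} {l a : ℝ}
    (h : Tendsto (fun n : ℕ => u n / n) atTop (𝓝 l)) (ha : l < a) :
    ∃ C, ∀ n : ℕ, u n ≤ a * n + C := by
  refine exists_le_mul_add_of_eventually ?_
  filter_upwards [h.eventually_lt_const ha, eventually_gt_atTop 0] with n hn hpos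
  exact ((div_lt_iff₀ (Nat.cast_pos.2 hpos)).1 hn).le

theorem exists_mul_sub_le_of_tendsto_div {u : ℕ → ℝ} {l a : ℝ}
    (h : Tendsto (fun n : ℕ => u n / n) atTop (𝓝 l)) (ha : a < l) :
    ∃ C, ∀ n : ℕ, a * n - C ≤ u n := by
  obtain ⟨C, hC⟩ := exists_le_mul_add_of_tendsto_div (u := fun n => -u n) (a := -a)
    (by simpa [neg_div] using h.neg) (neg_lt_neg ha)
  exact ⟨C, fun n => by linarith [hC n]⟩

/- With `S k` the sum of the first `k` increments, `u k - S k` only increases when the second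
term of the maximum takes over, and then it is at most `(p - b + o(1)) * k`. -/
theorem exists_le_mul_add_of_max_rec {u s w : ℕ → ℝ} {b p D : ℝ} (hbp : b ≤ p)
    (hu : ∀ k, u (k + 1) ≤ max (s k + u k) (w k + p * k + D))
    (hs : Tendsto (fun k : ℕ => (∑ l ∈ Finset.range k, s l) / k) atTop (𝓝 b))
    (hw : ∀ ε > 0, ∃ C, ∀ k : ℕ, w k ≤ ε * k + C) {q : ℝ} (hq : p < q) :
    ∃ C, ∀ k : ℕ, u k ≤ q * k + C := by
  obtain ⟨ε, hε, hεq⟩ : ∃ ε > 0, p + 3 * ε ≤ q := ⟨(q - p) / 3, by linarith, by linarith⟩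
  obtain ⟨C₁, hS_le⟩ := exists_le_mul_add_of_tendsto_div hs (show b < b + ε by linarith)
  obtain ⟨C₂, hle_S⟩ := exists_mul_sub_le_of_tendsto_div hs (show b - ε < b by linarith)
  obtain ⟨C₃, hw_le⟩ := hw ε hε
  set C := |u 0| + |C₃ + D + C₂ - (b - ε)|
  have hu0 : u 0 ≤ C := by linarith [le_abs_self (u 0), abs_nonneg (C₃ + D + C₂ - (b - ε))]
  have hCD : C₃ + D + C₂ - (b - ε) ≤ C := by
    linarith [abs_nonneg (u 0), le_abs_self (C₃ + D + C₂ - (b - ε))]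
  have hcompare (k : ℕ) : u k ≤ ∑ l ∈ Finset.range k, s l + (p - b + 2 * ε) * k + C := by
    induction k with
    | zero => simpa using hu0
    | succ k ih =>
      refine (hu k).trans (max_le ?_ ?_)
      · rw [Finset.sum_range_succ]
        push_cast
        linarith
      · have hS := hle_S (k + 1)
        push_cast at hS ⊢
        linarith [hw_le k]
  refine ⟨C₁ + C, fun k => ?_⟩
  have hqk : (p + 3 * ε) * k ≤ q * k := by gcongr
  linarith [hcompare k, hS_le k]

theorem abs_mul_sub_mul_div_le (α : ℝ) {N : ℕ} (hN : 0 < N) (n : ℕ) :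
    |α * n - α * N * (n / N : ℕ)| ≤ |α| * N := by
  have hn : (n : ℝ) = (n % N : ℕ) + (n / N : ℕ) * N := by exact_mod_cast (Nat.mod_add_div' n N).symm
  have hmod : α * n - α * N * (n / N : ℕ) = α * (n % N : ℕ) := by rw [hn]; ring
  rw [hmod, abs_mul, Nat.abs_cast]
  gcongr
  exact (Nat.mod_lt n hN).le

end LinearGrowth

/-! ### Max-plus matrices -/

/-- A `d × d` matrix over `ℝ_max`, encoded as in `mpVec`. -/
abbrev MPMatrix (d : ℕ) : Type := Fin d → Fin d → EReal

section Bound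

variable {d : ℕ} {M : MPMatrix d} {i j : Fin d} {H H' : Set (Fin d)}

open Classical in
/-- The largest absolute value `max {|M i j| : M i j ≠ -∞}` of a finite entry,
or `0` if there is none. -/
def mpBound (M : MPMatrix d) : ℝ :=
  ⨆ i, ⨆ j, if M i j = ⊥ then 0 else |(M i j).toReal|

/-- Every row of `M` indexed by `H` has a finite entry in a column indexed by `H`. -/
def HasFiniteRows (H : Set (Fin d)) (M : MPMatrix d) : Prop :=
  ∀ i ∈ H, ∃ j ∈ H, M i j ≠ ⊥

theorem mpBound_nonneg (M : MPMatrix d) : 0 ≤ mpBound M :=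
  Real.iSup_nonneg fun i => Real.iSup_nonneg fun j => by split_ifs <;> simp

theorem abs_toReal_le_mpBound (h : M i j ≠ ⊥) : |(M i j).toReal| ≤ mpBound M := by
  classical
  calc |(M i j).toReal| = if M i j = ⊥ then 0 else |(M i j).toReal| := (if_neg h).symm
    _ ≤ ⨆ j, if M i j = ⊥ then 0 else |(M i j).toReal| :=
      le_ciSup (f := fun j => if M i j = ⊥ then 0 else |(M i j).toReal|)
        (Set.finite_range _).bddAbove j
    _ ≤ mpBound M :=
      le_ciSup (f := fun i => ⨆ j, if M i j = ⊥ then 0 else |(M i j).toReal|)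
        (Set.finite_range _).bddAbove i

theorem le_mpBound (h : M i j ≠ ⊤) : M i j ≤ mpBound M := by
  by_cases hbot : M i j = ⊥
  · simp [hbot]
  · rw [← EReal.coe_toReal h hbot, EReal.coe_le_coe_iff]
    exact (le_abs_self _).trans (abs_toReal_le_mpBound hbot)

theorem neg_mpBound_le (h : M i j ≠ ⊥) : ((-mpBound M : ℝ) : EReal) ≤ M i j := by
  by_cases htop : M i j = ⊤
  · simp [htop]
  · rw [← EReal.coe_toReal htop h, EReal.coe_le_coe_iff]
    exact (neg_le_neg (abs_toReal_le_mpBound h)).trans (neg_abs_le _)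

theorem mpRestrict_of_mem (hi : i ∈ H) (hj : j ∈ H) : mpRestrict H M i j = M i j := by
  simp [mpRestrict, hi, hj]

theorem mem_of_mpRestrict_ne_bot (h : mpRestrict H M i j ≠ ⊥) : i ∈ H ∧ j ∈ H := by
  by_contra hij
  exact h (if_neg hij)

theorem mpRestrict_ne_top (h : M i j ≠ ⊤) : mpRestrict H M i j ≠ ⊤ := by
  unfold mpRestrict
  split_ifs
  exacts [h, bot_ne_top]

theorem mpRestrict_mono (h : H ⊆ H') (M : MPMatrix d) (i j : Fin d) :
    mpRestrict H M i j ≤ mpRestrict H' M i j := by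
  unfold mpRestrict
  split_ifs with hij hij'
  exacts [le_rfl, absurd ⟨h hij.1, h hij.2⟩ hij', bot_le, bot_le]

@[simp]
theorem mpRestrict_univ (M : MPMatrix d) : mpRestrict Set.univ M = M := by
  ext i j
  simp [mpRestrict]

theorem HasFiniteRows.mpRestrict (h : HasFiniteRows H M) : HasFiniteRows H (mpRestrict H M) :=
  fun i hi => (h i hi).imp fun j hj => ⟨hj.1, by rw [mpRestrict_of_mem hi hj.1]; exact hj.2⟩

theorem mpBound_mpRestrict_le (H : Set (Fin d)) (M : MPMatrix d) :
    mpBound (mpRestrict H M) ≤ mpBound M := by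
  classical
  refine Real.iSup_le (fun i => Real.iSup_le (fun j => ?_) (mpBound_nonneg M)) (mpBound_nonneg M)
  split_ifs with h
  · exact mpBound_nonneg M
  · obtain ⟨hi, hj⟩ := mem_of_mpRestrict_ne_bot h
    rw [mpRestrict_of_mem hi hj] at h ⊢
    exact abs_toReal_le_mpBound h

theorem measurable_mpBound : Measurable (mpBound : MPMatrix d → ℝ) := by
  classical
  refine Measurable.iSup fun i => Measurable.iSup fun j => ?_
  have hentry : Measurable fun M : MPMatrix d => M i j := by fun_prop
  exact .ite (hentry (measurableSet_singleton ⊥)) measurable_const hentry.ereal_toReal.abs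

theorem measurable_mpRestrict (H : Set (Fin d)) :
    Measurable (mpRestrict H : MPMatrix d → MPMatrix d) := by
  refine measurable_pi_iff.2 fun i => measurable_pi_iff.2 fun j => ?_
  unfold mpRestrict
  split_ifs <;> fun_prop

theorem measurableSet_entry_ne_bot (i j : Fin d) : MeasurableSet {M : MPMatrix d | M i j ≠ ⊥} := by
  have hentry : Measurable fun M : MPMatrix d => M i j := by fun_prop
  exact hentry (measurableSet_singleton ⊥).compl

theorem measurableSet_hasFiniteRows (H : Set (Fin d)) :
    MeasurableSet {M : MPMatrix d | HasFiniteRows H M} := by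
  simp only [HasFiniteRows, Set.ofPred_forall, Set.ofPred_exists, Set.ofPred_and]
  exact .iInter fun i => .iInter fun _ => .iUnion fun j =>
    .inter (.const _) (measurableSet_entry_ne_bot i j)

end Bound

section BoundSum

variable {d : ℕ}

/-- The bound `mpBound (f 0) + ⋯ + mpBound (f (n - 1))` on the finite entries of a product of the
first `n` matrices. -/
def mpBoundSum (f : ℕ → MPMatrix d) (n : ℕ) : ℝ := ∑ k ∈ Finset.range n, mpBound (f k)

theorem mpBoundSum_succ (f : ℕ → MPMatrix d) (n : ℕ) :
    mpBoundSum f (n + 1) = mpBoundSum f n + mpBound (f n) := Finset.sum_range_succ _ _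

theorem mpBoundSum_nonneg (f : ℕ → MPMatrix d) (n : ℕ) : 0 ≤ mpBoundSum f n :=
  Finset.sum_nonneg fun _ _ => mpBound_nonneg _

theorem mpBoundSum_mono (f : ℕ → MPMatrix d) : Monotone (mpBoundSum f) :=
  monotone_nat_of_le_succ fun n => by
    rw [mpBoundSum_succ]; linarith [mpBound_nonneg (f n)]

theorem mpBoundSum_add (f : ℕ → MPMatrix d) (n m : ℕ) :
    mpBoundSum f (n + m) = mpBoundSum f n + mpBoundSum (seqShift n f) m := by
  simp only [mpBoundSum, Finset.sum_range_add, seqShift, add_comm]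

theorem exists_mpBoundSum_block_le {f : ℕ → MPMatrix d} {m : ℝ}
    (hB : Tendsto (fun n : ℕ => mpBoundSum f n / n) atTop (𝓝 m)) {N : ℕ} (hN : 0 < N) {ε : ℝ}
    (hε : 0 < ε) : ∃ C, ∀ k : ℕ, mpBoundSum (seqShift (k * N) f) N ≤ ε * k + C := by
  have : (0 : ℝ) < N := Nat.cast_pos.2 hN
  set δ := ε / (2 * N) with hδ
  have hδpos : 0 < δ := by positivity
  obtain ⟨C₁, hle⟩ := exists_le_mul_add_of_tendsto_div hB (show m < m + δ by linarith)
  obtain ⟨C₂, hge⟩ := exists_mul_sub_le_of_tendsto_div hB (show m - δ < m by linarith)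
  refine ⟨C₁ + C₂ + (m + δ) * N, fun k => ?_⟩
  have hend := hle (k * N + N)
  have hstart := hge (k * N)
  rw [mpBoundSum_add] at hend
  push_cast at hend hstart
  have hδN : 2 * δ * (k * N) = ε * k := by rw [hδ]; field_simp
  linarith

end BoundSum

/-! ### Orbits -/

section Orbit

variable {d : ℕ} {f g : ℕ → MPMatrix d} {H : Set (Fin d)} {i j : Fin d}

theorem le_mpVec (M : MPMatrix d) (v : Fin d → EReal) (i j : Fin d) : M i j + v j ≤ mpVec M v i :=
  le_iSup (fun j => M i j + v j) j

theorem xvec_congr {n : ℕ} (h : ∀ k < n, f k = g k) : xvec f n = xvec g n := by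
  induction n with
  | zero => rfl
  | succ n ih =>
    simp only [xvec]
    rw [h n n.lt_succ_self, ih fun k hk => h k (hk.trans n.lt_succ_self)]

theorem dependsOn_xvec (n : ℕ) :
    DependsOn (fun f : ℕ → MPMatrix d => xvec f n) (Set.Iio n) :=
  fun _ _ h => xvec_congr h

theorem xvec_mono (h : ∀ n i j, f n i j ≤ g n i j) (n : ℕ) (i : Fin d) :
    xvec f n i ≤ xvec g n i := by
  induction n generalizing i with
  | zero => rfl
  | succ n ih => exact iSup_mono fun j => add_le_add (h n i j) (ih j)

theorem measurable_xvec (n : ℕ) : Measurable fun f : ℕ → MPMatrix d => xvec f n := by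
  induction n with
  | zero => exact measurable_const
  | succ n ih =>
    refine measurable_pi_iff.2 fun i => Measurable.iSup fun j => ?_
    have hentry : Measurable fun f : ℕ → MPMatrix d => f n i j := by fun_prop
    exact hentry.add (measurable_pi_iff.1 ih j)

theorem xvec_le_mpBoundSum (hf : ∀ n i j, f n i j ≠ ⊤) (n : ℕ) (i : Fin d) :
    xvec f n i ≤ mpBoundSum f n := by
  induction n generalizing i with
  | zero => simp [xvec, mpBoundSum]
  | succ n ih =>
    refine iSup_le fun j => ?_
    rw [mpBoundSum_succ, EReal.coe_add, add_comm]
    exact add_le_add (ih j) (le_mpBound (hf n i j))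

theorem neg_mpBoundSum_le_xvec (hH : ∀ n, HasFiniteRows H (f n)) (n : ℕ) (hi : i ∈ H) :
    ((-mpBoundSum f n : ℝ) : EReal) ≤ xvec f n i := by
  induction n generalizing i with
  | zero => simp [xvec, mpBoundSum]
  | succ n ih =>
    obtain ⟨j, hj, hne⟩ := hH n i hi
    refine le_trans ?_ (le_mpVec (f n) (xvec f n) i j)
    rw [mpBoundSum_succ, neg_add, EReal.coe_add, add_comm]
    exact add_le_add (neg_mpBound_le hne) (ih hj)

theorem xvec_add_le (hH : ∀ n, ∀ i ∈ H, ∀ j, f n i j ≠ ⊥ → j ∈ H) {n : ℕ} {C : ℝ}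
    (hC : ∀ j ∈ H, xvec f n j ≤ C) (m : ℕ) (hi : i ∈ H) :
    xvec f (m + n) i ≤ xvec (seqShift n f) m i + C := by
  induction m generalizing i with
  | zero => simpa [xvec] using hC i hi
  | succ m ih =>
    rw [Nat.add_right_comm]
    refine iSup_le fun j => ?_
    by_cases hij : f (m + n) i j = ⊥
    · simp [hij]
    · refine (add_le_add le_rfl (ih (hH _ i hi j hij))).trans ?_
      rw [← add_assoc]
      exact add_le_add (le_mpVec (seqShift n f m) _ i j) le_rfl

theorem le_xvec_add (hH : ∀ n, ∀ i ∈ H, ∀ j, f n i j ≠ ⊥ → j ∈ H) {n : ℕ} {C : ℝ}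
    (hC : ∀ j ∈ H, (C : EReal) ≤ xvec f n j) (m : ℕ) (hi : i ∈ H) :
    xvec (seqShift n f) m i + C ≤ xvec f (m + n) i := by
  induction m generalizing i with
  | zero => simpa [xvec] using hC i hi
  | succ m ih =>
    rw [Nat.add_right_comm, ← EReal.le_sub_iff_add_le (by simp) (by simp)]
    refine iSup_le fun j => ?_
    rw [EReal.le_sub_iff_add_le (by simp) (by simp)]
    by_cases hij : seqShift n f m i j = ⊥
    · simp [hij]
    · rw [add_assoc]
      exact (add_le_add le_rfl (ih (hH _ i hi j hij))).trans (le_mpVec (f (m + n)) _ i j)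

/-- The permutation reversing the order of `0, …, n - 1` and fixing the other integers. -/
def natRev (n k : ℕ) : ℕ := if k < n then n - 1 - k else k

theorem natRev_injective (n : ℕ) : Function.Injective (natRev n) := by
  intro a b h
  simp only [natRev] at h
  split_ifs at h <;> omega

theorem appProd_add (n m : ℕ) (f : ℕ → MPMatrix d) (v : Fin d → EReal) :
    appProd (n + m) f v = appProd n f (appProd m (seqShift n f) v) := by
  induction n generalizing f with
  | zero => rw [Nat.zero_add, seqShift_zero]; rfl
  | succ n ih =>
    rw [Nat.add_right_comm]
    simp only [appProd]
    rw [ih, ← seqShift_seqShift]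
    rfl

theorem appProd_add_const_le (hH : ∀ n i j, f n i j ≠ ⊥ → j ∈ H) {v w : Fin d → EReal} {C : ℝ}
    (hvw : ∀ j ∈ H, v j + C ≤ w j) (n : ℕ) (hi : i ∈ H) :
    appProd n f v i + C ≤ appProd n f w i := by
  induction n generalizing f i with
  | zero => exact hvw i hi
  | succ n ih =>
    rw [← EReal.le_sub_iff_add_le (by simp) (by simp)]
    refine iSup_le fun j => ?_
    rw [EReal.le_sub_iff_add_le (by simp) (by simp)]
    by_cases hij : f 0 i j = ⊥
    · simp [hij]
    · rw [add_assoc]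
      exact (add_le_add le_rfl (ih (fun n => hH (n + 1)) (hH 0 i j hij))).trans
        (le_mpVec (f 0) _ i j)

theorem measurable_appProd (n : ℕ) (v : Fin d → EReal) :
    Measurable fun f : ℕ → MPMatrix d => appProd n f v := by
  induction n with
  | zero => exact measurable_const
  | succ n ih =>
    refine measurable_pi_iff.2 fun i => Measurable.iSup fun j => ?_
    have hentry : Measurable fun f : ℕ → MPMatrix d => f 0 i j := by fun_prop
    have htail : Measurable fun f : ℕ → MPMatrix d => appProd n (seqShift 1 f) v :=
      ih.comp (measurable_seqShift 1)
    exact hentry.add (measurable_pi_iff.1 htail j)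

theorem dependsOn_appProd (n : ℕ) (v : Fin d → EReal) :
    DependsOn (fun f : ℕ → MPMatrix d => appProd n f v) (Set.Iio n) := by
  induction n with
  | zero => exact fun _ _ _ => rfl
  | succ n ih =>
    intro f g h
    simp only [appProd]
    rw [h 0 n.succ_pos]
    congr 1
    exact ih fun k hk => h (k + 1) (Nat.succ_lt_succ hk)

theorem lvec_eq_xvec (n : ℕ) (f : ℕ → MPMatrix d) :
    lvec n f = xvec (fun k => f (natRev n k)) n := by
  induction n generalizing f with
  | zero => rfl
  | succ n ih =>
    have htail : appProd n (fun k => f (k + 1)) (fun _ => 0) =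
        xvec (fun k => f (natRev (n + 1) k)) n := by
      refine (ih (seqShift 1 f)).trans (xvec_congr fun k hk => congrArg f ?_)
      simp only [natRev, hk, Nat.lt_succ_of_lt hk, if_true]
      omega
    simp only [lvec, appProd, xvec, htail]
    simp [natRev]

theorem add_lvec_le (n : ℕ) (f : ℕ → MPMatrix d) (i j : Fin d) :
    f 0 i j + lvec n (seqShift 1 f) j ≤ lvec (n + 1) f i :=
  le_mpVec (f 0) _ i j

theorem lvec_add_const_le (hH : ∀ n i j, f n i j ≠ ⊥ → j ∈ H) {n m : ℕ} {C : ℝ}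
    (hC : ∀ j ∈ H, (C : EReal) ≤ lvec m (seqShift n f) j) (hi : i ∈ H) :
    lvec n f i + C ≤ lvec (n + m) f i := by
  rw [lvec, lvec, appProd_add]
  exact appProd_add_const_le hH (fun j hj => (zero_add (C : EReal)).trans_le (hC j hj)) n hi

end Orbit

/-! ### Real-valued summaries of an orbit -/

section Summaries

variable {d : ℕ} {v : Fin d → EReal} {K : ℝ} {H : Set (Fin d)}

/-- The largest coordinate of `v`, truncated from below at `-K` to make it a real number. -/
def truncMax (K : ℝ) (v : Fin d → EReal) : ℝ := (max (⨆ i, v i) (-K : ℝ)).toReal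

/-- The smallest of the coordinates of `v` indexed by `H`, or `0` if it is infinite. -/
def minCoord (H : Set (Fin d)) (v : Fin d → EReal) : ℝ := (⨅ i ∈ H, v i).toReal

theorem measurable_truncMax (K : ℝ) : Measurable (truncMax K : (Fin d → EReal) → ℝ) :=
  ((Measurable.iSup measurable_pi_apply).max measurable_const).ereal_toReal

theorem measurable_minCoord (H : Set (Fin d)) :
    Measurable (minCoord H : (Fin d → EReal) → ℝ) :=
  (Measurable.iInf fun i => Measurable.iInf fun _ => measurable_pi_apply i).ereal_toReal

theorem coe_truncMax {B : ℝ} (hv : ∀ i, v i ≤ B) :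
    (truncMax K v : EReal) = max (⨆ i, v i) (-K : ℝ) :=
  EReal.coe_toReal (max_lt ((iSup_le hv).trans_lt (EReal.coe_lt_top B)) (EReal.coe_lt_top _)).ne
    ((EReal.bot_lt_coe _).trans_le (le_max_right _ _)).ne'

theorem le_truncMax {B : ℝ} (hv : ∀ i, v i ≤ B) (i : Fin d) : v i ≤ truncMax K v := by
  rw [coe_truncMax hv]
  exact (le_iSup v i).trans (le_max_left _ _)

theorem truncMax_le {B : ℝ} (hv : ∀ i, v i ≤ B) (hK : -K ≤ B) : truncMax K v ≤ B := by
  rw [← EReal.coe_le_coe_iff, coe_truncMax hv]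
  exact max_le (iSup_le hv) (EReal.coe_le_coe_iff.2 hK)

theorem neg_le_truncMax {B : ℝ} (hv : ∀ i, v i ≤ B) : -K ≤ truncMax K v := by
  rw [← EReal.coe_le_coe_iff, coe_truncMax hv]
  exact le_max_right _ _

theorem coe_minCoord {a b : ℝ} (hH : H.Nonempty) (ha : ∀ i ∈ H, (a : EReal) ≤ v i)
    (hb : ∀ i ∈ H, v i ≤ b) : (minCoord H v : EReal) = ⨅ i ∈ H, v i := by
  obtain ⟨i, hi⟩ := hH
  exact EReal.coe_toReal (((iInf₂_le i hi).trans (hb i hi)).trans_lt (EReal.coe_lt_top b)).ne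
    ((EReal.bot_lt_coe a).trans_le (le_iInf₂ ha)).ne'

theorem minCoord_le {a b : ℝ} (ha : ∀ i ∈ H, (a : EReal) ≤ v i) (hb : ∀ i ∈ H, v i ≤ b)
    {i : Fin d} (hi : i ∈ H) : (minCoord H v : EReal) ≤ v i := by
  rw [coe_minCoord ⟨i, hi⟩ ha hb]
  exact iInf₂_le i hi

theorem le_minCoord {a b : ℝ} (hH : H.Nonempty) (ha : ∀ i ∈ H, (a : EReal) ≤ v i)
    (hb : ∀ i ∈ H, v i ≤ b) : a ≤ minCoord H v := by
  rw [← EReal.coe_le_coe_iff, coe_minCoord hH ha hb]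
  exact le_iInf₂ ha

theorem abs_minCoord_le {a : ℝ} (hH : H.Nonempty) (ha : ∀ i ∈ H, ((-a : ℝ) : EReal) ≤ v i)
    (hb : ∀ i ∈ H, v i ≤ a) : |minCoord H v| ≤ a := by
  obtain ⟨i, hi⟩ := id hH
  exact abs_le.2 ⟨le_minCoord hH ha hb,
    EReal.coe_le_coe_iff.1 ((minCoord_le ha hb hi).trans (hb i hi))⟩

end Summaries

/-! ### Independent sequences of max-plus matrices -/

/-- An i.i.d. sequence of matrices over `ℝ_max` whose finite entries are integrable. -/
structure IsMPSeq {Ω : Type*} [MeasurableSpace Ω] {d : ℕ} (X : ℕ → Ω → MPMatrix d)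
    (μ : Measure Ω) : Prop where
  iid : IsIID X μ
  ne_top : ∀ n ω i j, X n ω i j ≠ ⊤
  integrable : Integrable (fun ω => mpBound (X 0 ω)) μ

/-- `l` is the maximal Lyapunov exponent of the submatrices of `X` indexed by `c`. -/
def IsExponent {Ω : Type*} [MeasurableSpace Ω] {d : ℕ} (X : ℕ → Ω → MPMatrix d) (μ : Measure Ω)
    (c : Set (Fin d)) (l : EReal) : Prop :=
  ∀ᵐ ω ∂μ, Tendsto
    (fun n => mpScale n (⨆ i, ⨆ (_ : i ∈ c), xvec (fun m => mpRestrict c (X m ω)) n i))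
    atTop (𝓝 l)

namespace IsMPSeq

variable {Ω : Type*} [MeasurableSpace Ω] {μ : Measure Ω} {d : ℕ} {X : ℕ → Ω → MPMatrix d}

theorem isProbabilityMeasure (h : IsMPSeq X μ) : IsProbabilityMeasure μ :=
  h.iid.indep.isProbabilityMeasure

theorem restrict (h : IsMPSeq X μ) (H : Set (Fin d)) :
    IsMPSeq (fun n ω => mpRestrict H (X n ω)) μ where
  iid := h.iid.comp (measurable_mpRestrict H)
  ne_top n ω i j := mpRestrict_ne_top (h.ne_top n ω i j)
  integrable := h.integrable.mono' (measurable_mpBound.comp ((measurable_mpRestrict H).comp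
      (h.iid.measurable 0))).aestronglyMeasurable <| Eventually.of_forall fun ω => by
    rw [Real.norm_of_nonneg (mpBound_nonneg _)]
    exact mpBound_mpRestrict_le _ _

theorem integrable_mpBound (h : IsMPSeq X μ) (n : ℕ) : Integrable (fun ω => mpBound (X n ω)) μ :=
  ((h.iid.identDistrib n).comp measurable_mpBound).integrable_iff.2 h.integrable

theorem integrable_mpBoundSum (h : IsMPSeq X μ) (n : ℕ) :
    Integrable (fun ω => mpBoundSum (X · ω) n) μ :=
  integrable_finsetSum _ fun k _ => h.integrable_mpBound k

theorem integral_mpBoundSum (h : IsMPSeq X μ) (n : ℕ) :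
    ∫ ω, mpBoundSum (X · ω) n ∂μ = n * ∫ ω, mpBound (X 0 ω) ∂μ := by
  have hterm (k : ℕ) : ∫ ω, mpBound (X k ω) ∂μ = ∫ ω, mpBound (X 0 ω) ∂μ :=
    ((h.iid.identDistrib k).comp measurable_mpBound).integral_eq
  simp only [mpBoundSum]
  rw [integral_finsetSum _ fun k _ => h.integrable_mpBound k]
  simp [hterm]

theorem tendsto_mpBoundSum (h : IsMPSeq X μ) :
    ∀ᵐ ω ∂μ, Tendsto (fun n : ℕ => mpBoundSum (X · ω) n / n) atTop
      (𝓝 (∫ ω, mpBound (X 0 ω) ∂μ)) := by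
  have hlaw := h.iid.block_strong_law (N := 1) (F := fun f => mpBound (f 0))
    (measurable_mpBound.comp (measurable_pi_apply 0))
    (fun f g hfg => congrArg mpBound (hfg 0 (Set.mem_Iio.2 one_pos))) h.integrable
  simpa [seqShift, mpBoundSum] using hlaw

theorem integrable_of_abs_le (h : IsMPSeq X μ) {F : (ℕ → MPMatrix d) → ℝ} (hF : Measurable F)
    (n : ℕ) (K : ℝ) (hle : ∀ᵐ ω ∂μ, |F (X · ω)| ≤ mpBoundSum (X · ω) n + K) :
    Integrable (fun ω => F (X · ω)) μ := by
  have := h.isProbabilityMeasure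
  exact ((h.integrable_mpBoundSum n).add (integrable_const K)).mono'
    (hF.comp h.iid.measurable_path).aestronglyMeasurable (hle.mono fun ω hω => by simpa using hω)

theorem xvec_le (h : IsMPSeq X μ) (ω : Ω) (n : ℕ) (i : Fin d) :
    xvec (X · ω) n i ≤ mpBoundSum (X · ω) n :=
  xvec_le_mpBoundSum (fun n => h.ne_top n ω) n i

theorem integrable_truncMax_xvec (h : IsMPSeq X μ) (n : ℕ) {K : ℝ} (hK : 0 ≤ K) :
    Integrable (fun ω => truncMax K (xvec (X · ω) n)) μ := by
  refine h.integrable_of_abs_le (F := fun f => truncMax K (xvec f n))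
    ((measurable_truncMax K).comp (measurable_xvec n)) n K (Eventually.of_forall fun ω => ?_)
  have hsum := mpBoundSum_nonneg (X · ω) n
  have hlower := neg_le_truncMax (K := K) (h.xvec_le ω n)
  have hupper := truncMax_le (h.xvec_le ω n) (show -K ≤ _ by linarith)
  exact abs_le.2 ⟨by linarith, by linarith⟩

theorem ae_hasFiniteRows (h : IsMPSeq X μ) {H : Set (Fin d)}
    (hH : ∀ᵐ ω ∂μ, HasFiniteRows H (X 0 ω)) : ∀ᵐ ω ∂μ, ∀ n, HasFiniteRows H (X n ω) :=
  h.iid.ae_forall_mem (measurableSet_hasFiniteRows H) hH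

theorem integrable_minCoord_xvec (h : IsMPSeq X μ) {H : Set (Fin d)} (hne : H.Nonempty)
    (hH : ∀ᵐ ω ∂μ, HasFiniteRows H (X 0 ω)) (n : ℕ) :
    Integrable (fun ω => minCoord H (xvec (X · ω) n)) μ := by
  refine h.integrable_of_abs_le (F := fun f => minCoord H (xvec f n))
    ((measurable_minCoord H).comp (measurable_xvec n)) n 0 ?_
  filter_upwards [h.ae_hasFiniteRows hH] with ω hω
  rw [add_zero]
  exact abs_minCoord_le hne (fun i hi => neg_mpBoundSum_le_xvec hω n hi)
    fun i _ => h.xvec_le ω n i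

theorem ae_arcRel (h : IsMPSeq X μ) :
    ∀ᵐ ω ∂μ, ∀ n i j, X n ω i j ≠ ⊥ → arcRel μ (X 0) i j := by
  have hentry (i j : Fin d) : ∀ᵐ ω ∂μ, ∀ n, X n ω i j ≠ ⊥ → arcRel μ (X 0) i j := by
    by_cases hij : arcRel μ (X 0) i j
    · exact Eventually.of_forall fun _ _ _ => hij
    · have hbot : ∀ᵐ ω ∂μ, ¬ X 0 ω i j ≠ ⊥ := ae_iff.2 (by simpa [arcRel] using hij)
      filter_upwards [h.iid.ae_forall_mem (measurableSet_entry_ne_bot i j).compl hbot]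
        with ω hω n hn
      exact absurd hn (hω n)
  filter_upwards [ae_all_iff.2 fun i => ae_all_iff.2 (hentry i)] with ω hω n i j
  exact hω i j n

theorem identDistrib_lvec_xvec (h : IsMPSeq X μ) (n : ℕ) :
    IdentDistrib (fun ω => lvec n (X · ω)) (fun ω => xvec (X · ω) n) μ μ := by
  simp only [lvec_eq_xvec]
  exact (h.iid.identDistrib_reindex (natRev_injective n)).comp (measurable_xvec n)

end IsMPSeq

/-! ### Components and the limit formula -/

section Graph

open Relation

variable {d : ℕ} {r : Fin d → Fin d → Prop} {γ : Set (Fin d) → EReal} {i j : Fin d}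

/-- The strongly connected component of a node. -/
def sccOf (r : Fin d → Fin d → Prop) (i : Fin d) : Set (Fin d) :=
  {j | ReflTransGen r i j ∧ ReflTransGen r j i}

theorem isSCC_sccOf (i : Fin d) : IsSCC r (sccOf r i) := ⟨i, rfl⟩

theorem mem_sccOf (i : Fin d) : i ∈ sccOf r i := ⟨.refl, .refl⟩

theorem IsSCC.nonempty {c : Set (Fin d)} (hc : IsSCC r c) : c.Nonempty := by
  obtain ⟨i, rfl⟩ := hc
  exact ⟨i, mem_sccOf i⟩

theorem le_limFormula {c : Set (Fin d)} (hc : IsSCC r c) (hi : nodeReach r i c) :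
    γ c ≤ limFormula r γ i :=
  le_iSup₂_of_le c ⟨hc, hi⟩ le_rfl

theorem limFormula_anti (h : ReflTransGen r i j) : limFormula r γ j ≤ limFormula r γ i :=
  iSup₂_le fun _ hc => le_limFormula hc.1 (hc.2.imp fun _ hk => ⟨hk.1, h.trans hk.2⟩)

theorem exists_isSCC_eq_limFormula (γ : Set (Fin d) → EReal) (i : Fin d) :
    ∃ c, IsSCC r c ∧ nodeReach r i c ∧ γ c = limFormula r γ i := by
  let T := {c : Set (Fin d) // IsSCC r c ∧ nodeReach r i c}
  have : Nonempty T := ⟨⟨sccOf r i, isSCC_sccOf i, i, mem_sccOf i, .refl⟩⟩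
  obtain ⟨c, hc⟩ := exists_eq_ciSup_of_finite (f := fun c : T => γ c.1)
  refine ⟨c.1, c.2.1, c.2.2, hc.trans ?_⟩
  rw [limFormula, iSup_subtype]

theorem gammaBrack_eq_limFormula {c : Set (Fin d)} (hc : IsSCC r c) (hi : i ∈ c) :
    gammaBrack r γ c = limFormula r γ i := by
  obtain ⟨k, rfl⟩ := hc
  refine iSup_congr fun c' => iSup_congr_Prop (and_congr_right fun _ => ?_) fun _ => rfl
  refine ⟨?_, fun h => ⟨i, hi, h⟩⟩
  rintro ⟨l, hl, m, hm, hlm⟩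
  exact ⟨m, hm, (hi.2.trans hl.1).trans hlm⟩

theorem mem_Hset_iff {c : Set (Fin d)} (hc : IsSCC r c) (hi : i ∈ c) :
    j ∈ Hset r γ c ↔ ReflTransGen r i j ∧ limFormula r γ j = limFormula r γ i := by
  constructor
  · rintro ⟨c', hc', ⟨k, hk, hkj⟩, hjc', heq⟩
    have hij : ReflTransGen r i j := by
      obtain ⟨l, rfl⟩ := hc
      exact (hi.2.trans hk.1).trans hkj
    refine ⟨hij, (limFormula_anti hij).antisymm ?_⟩
    rw [← gammaBrack_eq_limFormula hc hi, ← heq]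
    exact le_limFormula hc' hjc'
  · rintro ⟨hij, heq⟩
    obtain ⟨c', hc', hjc', hγ⟩ := exists_isSCC_eq_limFormula (r := r) γ j
    exact ⟨c', hc', ⟨i, hi, hij⟩, hjc', by rw [hγ, heq, gammaBrack_eq_limFormula hc hi]⟩

theorem self_mem_Hset (i : Fin d) : i ∈ Hset r γ (sccOf r i) :=
  (mem_Hset_iff (isSCC_sccOf i) (mem_sccOf i)).2 ⟨.refl, rfl⟩

end Graph

/-! ### The upper bound -/

section UpperBound

variable {d : ℕ} {f : ℕ → MPMatrix d} {c D R : Set (Fin d)}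

theorem xvec_mpRestrict_of_notMem {i : Fin d} (hi : i ∉ c) {n : ℕ} (hn : 0 < n) :
    xvec (fun m => mpRestrict c (f m)) n i = ⊥ := by
  obtain ⟨n, rfl⟩ := Nat.exists_eq_add_of_lt hn
  simp [xvec, mpVec, mpRestrict, hi]

theorem xvec_add_le_max (hf : ∀ n i j, f n i j ≠ ⊤)
    (hD : ∀ n, ∀ i ∈ c, ∀ j, f n i j ≠ ⊥ → j ∈ c ∨ j ∈ D) {t N : ℕ} {C Z : ℝ}
    (hC : ∀ i ∈ c, xvec f t i ≤ C) (hZ : ∀ j ∈ D, ∀ m ≤ N, xvec f (m + t) j ≤ Z)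
    {m : ℕ} (hm : m ≤ N) {i : Fin d} (hi : i ∈ c) :
    xvec f (m + t) i ≤ max (xvec (seqShift t fun n => mpRestrict c (f n)) m i + C)
      ((mpBoundSum (seqShift t f) m + Z : ℝ) : EReal) := by
  induction m generalizing i with
  | zero => exact le_max_of_le_left (by simpa [xvec] using hC i hi)
  | succ m ih =>
    rw [Nat.add_right_comm]
    refine iSup_le fun j => ?_
    by_cases hij : f (m + t) i j = ⊥
    · simp [hij]
    have hentry : f (m + t) i j ≤ mpBound (seqShift t f m) := le_mpBound (hf (m + t) i j)
    rw [mpBoundSum_succ]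
    rcases hD (m + t) i hi j hij with hj | hj
    · refine (add_le_add le_rfl (ih (by omega) hj)).trans ?_
      have hmono : Monotone (f (m + t) i j + ·) := fun x y h => add_le_add le_rfl h
      refine hmono.map_max.le.trans (max_le_max ?_ ?_)
      · rw [← add_assoc, ← mpRestrict_of_mem (H := c) (M := f (m + t)) hi hj]
        exact add_le_add (le_mpVec (seqShift t (fun n => mpRestrict c (f n)) m) _ i j) le_rfl
      · rw [add_comm (mpBoundSum _ _) (mpBound _), add_assoc, EReal.coe_add (mpBound _)]
        exact add_le_add hentry le_rfl
    · refine le_max_of_le_right ((add_le_add hentry (hZ j hj m (by omega))).trans ?_)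
      rw [← EReal.coe_add, EReal.coe_le_coe_iff]
      linarith [mpBoundSum_nonneg (seqShift t f) m]

theorem exists_block_recursion (hf : ∀ n i j, f n i j ≠ ⊤)
    (hD : ∀ n, ∀ i ∈ c, ∀ j, f n i j ≠ ⊥ → j ∈ c ∨ j ∈ D) {a C : ℝ}
    (hDa : ∀ j ∈ D, ∀ n : ℕ, xvec f n j ≤ ((a * n + C : ℝ) : EReal)) (K : ℝ) (N : ℕ) :
    ∃ (E : ℝ) (u : ℕ → ℝ),
      (∀ k, u (k + 1) ≤
        max (truncMax K (xvec (seqShift (k * N) fun n => mpRestrict c (f n)) N) + u k)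
          (mpBoundSum (seqShift (k * N) f) N + a * N * k + E)) ∧
      ∀ k, ∀ i ∈ c, xvec f (k * N) i ≤ u k := by
  let E := |a| * N + C
  let u : ℕ → ℝ := Nat.rec 0 fun k x =>
    max (truncMax K (xvec (seqShift (k * N) fun n => mpRestrict c (f n)) N) + x)
      (mpBoundSum (seqShift (k * N) f) N + a * N * k + E)
  have hZ (k : ℕ) : ∀ j ∈ D, ∀ m ≤ N, xvec f (m + k * N) j ≤ ((a * N * k + E : ℝ) : EReal) := by
    intro j hj m hm
    refine (hDa j hj _).trans (EReal.coe_le_coe_iff.2 ?_)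
    have ham : a * m ≤ |a| * N := by gcongr; exact le_abs_self a
    push_cast
    linarith
  refine ⟨E, u, fun k => le_rfl, fun k => ?_⟩
  induction k with
  | zero => intro i _; simp [xvec, u]
  | succ k ih =>
    intro i hi
    rw [Nat.succ_mul, add_comm]
    refine (xvec_add_le_max hf hD ih (hZ k) le_rfl hi).trans ?_
    refine (max_le_max ?_ (EReal.coe_le_coe_iff.2 ?_)).trans
      EReal.coe_strictMono.monotone.map_max.ge
    · rw [EReal.coe_add]
      exact add_le_add (le_truncMax
        (xvec_le_mpBoundSum (fun n i j => mpRestrict_ne_top (hf _ i j)) N) i) le_rfl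
    · rw [add_assoc]

theorem growsAtMost_of_blocks (hf : ∀ n i j, f n i j ≠ ⊤)
    (hR : ∀ n, ∀ i ∈ R, ∀ j, f n i j ≠ ⊥ → j ∈ R) {m : ℝ}
    (hB : Tendsto (fun n : ℕ => mpBoundSum f n / n) atTop (𝓝 m)) {N : ℕ} (hN : 0 < N)
    {p α : ℝ} (hpα : p < α * N) {i : Fin d} (hi : i ∈ R)
    (hblock : ∃ C : ℝ, ∀ j ∈ R, ∀ k : ℕ, xvec f (k * N) j ≤ ((p * k + C : ℝ) : EReal)) :
    GrowsAtMost (fun n => xvec f n i) α := by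
  obtain ⟨C, hC⟩ := hblock
  obtain ⟨C', hC'⟩ := exists_mpBoundSum_block_le hB hN (sub_pos.2 hpα)
  refine ⟨|α| * N + C' + C, fun n => ?_⟩
  set k := n / N
  have hsplit : n % N + k * N = n := Nat.mod_add_div' n N
  have hrem : mpBoundSum (seqShift (k * N) f) (n % N) ≤ mpBoundSum (seqShift (k * N) f) N :=
    mpBoundSum_mono _ (Nat.mod_lt n hN).le
  have hround := abs_le.1 (abs_mul_sub_mul_div_le α hN n)
  calc xvec f n i = xvec f (n % N + k * N) i := by rw [hsplit]
    _ ≤ xvec (seqShift (k * N) f) (n % N) i + ((p * k + C : ℝ) : EReal) :=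
      xvec_add_le hR (fun j hj => hC j hj k) _ hi
    _ ≤ mpBoundSum (seqShift (k * N) f) (n % N) + ((p * k + C : ℝ) : EReal) :=
      add_le_add (xvec_le_mpBoundSum (fun n => hf _) _ _) le_rfl
    _ ≤ ((α * n + (|α| * N + C' + C) : ℝ) : EReal) := by
      rw [← EReal.coe_add, EReal.coe_le_coe_iff]
      linarith [hC' k]

theorem growsAtMost_of_component (hf : ∀ n i j, f n i j ≠ ⊤)
    (hc : ∀ n, ∀ i ∈ c, ∀ j, f n i j ≠ ⊥ → j ∈ c ∨ j ∈ D)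
    (hD : ∀ n, ∀ i ∈ D, ∀ j, f n i j ≠ ⊥ → j ∈ D) {a α K b m : ℝ} {N : ℕ}
    (hN : 0 < N) (haα : a < α) (hDa : ∀ j : D, GrowsAtMost (fun n => xvec f n j) a)
    (hs : Tendsto (fun k : ℕ => (∑ l ∈ Finset.range k,
      truncMax K (xvec (seqShift (l * N) fun n => mpRestrict c (f n)) N)) / k) atTop (𝓝 b))
    (hb : b ≤ a * N) (hB : Tendsto (fun n : ℕ => mpBoundSum f n / n) atTop (𝓝 m))
    {i : Fin d} (hi : i ∈ c) : GrowsAtMost (fun n => xvec f n i) α := by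
  have hN' : (0 : ℝ) < N := Nat.cast_pos.2 hN
  obtain ⟨C, hC⟩ := exists_forall_le_of_growsAtMost hDa
  obtain ⟨E, u, hu, hxu⟩ := exists_block_recursion hf hc (fun j hj => hC ⟨j, hj⟩) K N
  obtain ⟨p, hap, hpα⟩ := exists_between (mul_lt_mul_of_pos_right haα hN')
  obtain ⟨C', hC'⟩ := exists_le_mul_add_of_max_rec hb hu hs
    (fun ε hε => exists_mpBoundSum_block_le hB hN hε) hap
  refine growsAtMost_of_blocks (R := c ∪ D) hf ?_ hB hN hpα (Or.inl hi)
    ⟨max C C', ?_⟩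
  · rintro n j (hj | hj) k hjk
    exacts [hc n j hj k hjk, Or.inr (hD n j hj k hjk)]
  · rintro j (hj | hj) k
    · refine (hxu k j hj).trans (EReal.coe_le_coe_iff.2 ((hC' k).trans ?_))
      gcongr
      exact le_max_right _ _
    · refine (hC ⟨j, hj⟩ (k * N)).trans (EReal.coe_le_coe_iff.2 ?_)
      have hk : a * N * k ≤ p * k := by gcongr
      push_cast
      linarith [le_max_left C C']

end UpperBound

namespace IsMPSeq

open Relation

variable {Ω : Type*} [MeasurableSpace Ω] {μ : Measure Ω} {d : ℕ} {X : ℕ → Ω → MPMatrix d}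

/- Fatou's lemma applies to the nonnegative functions `(mpBoundSum n - truncMax n) / n`. -/
theorem exists_integral_truncMax_le (h : IsMPSeq X μ) {c : Set (Fin d)} {Γ : EReal}
    (hΓ : IsExponent X μ c Γ) {a : ℝ} (ha : Γ < a) :
    ∃ N : ℕ, 0 < N ∧ ∃ K : ℝ, 0 ≤ K ∧
      ∫ ω, truncMax K (xvec (fun m => mpRestrict c (X m ω)) N) ∂μ ≤ a * N := by
  have := h.isProbabilityMeasure
  have hr := h.restrict c
  obtain ⟨a', hΓa', ha'a⟩ := EReal.lt_iff_exists_real_btwn.1 ha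
  rw [EReal.coe_lt_coe_iff] at ha'a
  set m := ∫ ω, mpBound (mpRestrict c (X 0 ω)) ∂μ
  set B := fun (n : ℕ) ω => mpBoundSum (fun k => mpRestrict c (X k ω)) n
  set T := fun (n : ℕ) ω => truncMax (|a'| * n) (xvec (fun k => mpRestrict c (X k ω)) n)
  have hB (n : ℕ) : Integrable (B n) μ := hr.integrable_mpBoundSum n
  have hT (n : ℕ) : Integrable (T n) μ := hr.integrable_truncMax_xvec n (by positivity)
  have hle (n : ℕ) (ω : Ω) : T n ω ≤ B n ω :=
    truncMax_le (hr.xvec_le ω n)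
      ((neg_nonpos.2 (by positivity)).trans (mpBoundSum_nonneg _ n))
  have hlarge : ∀ᵐ ω ∂μ, ∀ᶠ n : ℕ in atTop, m - (a + a') / 2 ≤ (B n ω - T n ω) / n := by
    filter_upwards [hΓ, hr.tendsto_mpBoundSum] with ω hω hBω
    filter_upwards [eventually_le_of_tendsto_mpScale hω hΓa', eventually_gt_atTop 0,
      hBω.eventually_const_lt (show m - (a - a') / 2 < m by linarith)] with n hn hpos hBn
    have hn' : (0 : ℝ) < n := Nat.cast_pos.2 hpos
    have hx (i : Fin d) :
        xvec (fun k => mpRestrict c (X k ω)) n i ≤ ((a' * n : ℝ) : EReal) := by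
      by_cases hi : i ∈ c
      · exact (le_iSup₂ (f := fun i (_ : i ∈ c) => xvec (fun k => mpRestrict c (X k ω)) n i)
          i hi).trans hn
      · simp [xvec_mpRestrict_of_notMem hi hpos]
    have hTn : T n ω ≤ a' * n := truncMax_le hx (by nlinarith [neg_abs_le a'])
    rw [lt_div_iff₀ hn'] at hBn
    rw [le_div_iff₀ hn']
    linarith
  obtain ⟨N, hlt, hN⟩ := ((eventually_lt_integral_of_ae_eventually_le
    (fun n => ((hB n).sub (hT n)).div_const n)
    (fun n => Eventually.of_forall fun ω => div_nonneg (sub_nonneg.2 (hle n ω)) n.cast_nonneg)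
    hlarge (show m - a < m - (a + a') / 2 by linarith)).and (eventually_gt_atTop 0)).exists
  refine ⟨N, hN, |a'| * N, by positivity, ?_⟩
  have hN' : (0 : ℝ) < N := Nat.cast_pos.2 hN
  simp only [Pi.sub_apply] at hlt
  rw [integral_div, integral_sub (hB N) (hT N), hr.integral_mpBoundSum, lt_div_iff₀ hN'] at hlt
  linarith

theorem ae_growsAtMost (h : IsMPSeq X μ) {γ : Set (Fin d) → EReal}
    (hγ : ∀ c, IsSCC (arcRel μ (X 0)) c → IsExponent X μ c (γ c)) (i : Fin d) {α : ℝ}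
    (hα : limFormula (arcRel μ (X 0)) γ i < α) :
    ∀ᵐ ω ∂μ, GrowsAtMost (fun n => xvec (X · ω) n i) α := by
  set r := arcRel μ (X 0)
  induction hcard : {k | ReflTransGen r i k}.ncard using Nat.strong_induction_on
    generalizing i α with
  | _ q ih =>
    subst hcard
    set D : Set (Fin d) := {j | ReflTransGen r i j ∧ ¬ ReflTransGen r j i}
    obtain ⟨a, hia, haα⟩ := EReal.lt_iff_exists_real_btwn.1 hα
    have hbelow : ∀ᵐ ω ∂μ, ∀ j : D, GrowsAtMost (fun n => xvec (X · ω) n j) a := by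
      refine ae_all_iff.2 fun j => ih _ ?_ j.1 ((limFormula_anti j.2.1).trans_lt hia) rfl
      exact Set.ncard_lt_ncard ⟨fun k hk => j.2.1.trans hk, fun hsub => j.2.2 (hsub .refl)⟩
        (Set.toFinite _)
    have hγc : γ (sccOf r i) < a :=
      (le_limFormula (isSCC_sccOf i) ⟨i, mem_sccOf i, .refl⟩).trans_lt hia
    obtain ⟨N, hN, K, hK, hint⟩ := h.exists_integral_truncMax_le (hγ _ (isSCC_sccOf i)) hγc
    have hlaw := (h.restrict (sccOf r i)).iid.block_strong_law
      ((measurable_truncMax K).comp (measurable_xvec N))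
      (fun f g hfg => congrArg (truncMax K) (dependsOn_xvec N hfg))
      ((h.restrict (sccOf r i)).integrable_truncMax_xvec N hK)
    filter_upwards [hbelow, hlaw, h.tendsto_mpBoundSum, h.ae_arcRel] with ω hD hs hB harc
    refine growsAtMost_of_component (fun n => h.ne_top n ω) (fun n j hj k hjk => ?_)
      (fun n j hj k hjk => ?_) hN (EReal.coe_lt_coe_iff.1 haα) hD hs hint hB (mem_sccOf i)
    · have hik : ReflTransGen r i k := hj.1.tail (harc n j k hjk)
      exact (em (ReflTransGen r k i)).imp (fun hki => ⟨hik, hki⟩) fun hki => ⟨hik, hki⟩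
    · exact ⟨hj.1.tail (harc n j k hjk), fun hki => hj.2 (.head (harc n j k hjk) hki)⟩

end IsMPSeq

/-! ### Fast nodes -/

/-- The node `i` is fast at rate `β`: the probability that `x_i(n, 0) ≥ β * n - C` does not tend
to `0`, for some constant `C`. -/
def IsFastNode {Ω : Type*} [MeasurableSpace Ω] {d : ℕ} (X : ℕ → Ω → MPMatrix d) (μ : Measure Ω)
    (β : ℝ) (i : Fin d) : Prop :=
  ∃ C : ℝ, ¬ Tendsto (fun n : ℕ => μ {ω | ((β * n - C : ℝ) : EReal) ≤ xvec (X · ω) n i}) atTop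
    (𝓝 0)

theorem IsFastNode.mono {Ω : Type*} [MeasurableSpace Ω] {μ : Measure Ω} {d : ℕ}
    {X Y : ℕ → Ω → MPMatrix d} {β : ℝ} {i : Fin d} (hXY : ∀ n ω i j, X n ω i j ≤ Y n ω i j)
    (h : IsFastNode X μ β i) : IsFastNode Y μ β i := by
  obtain ⟨C, hC⟩ := h
  refine ⟨C, fun hY => hC (tendsto_of_tendsto_of_tendsto_of_le_of_le tendsto_const_nhds hY
    (fun _ => zero_le) fun n => measure_mono fun ω hω => ?_)⟩
  exact le_trans hω (xvec_mono (fun n => hXY n ω) n i)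

namespace IsMPSeq

open Relation

variable {Ω : Type*} [MeasurableSpace Ω] {μ : Measure Ω} {d : ℕ} {X : ℕ → Ω → MPMatrix d}
  {β : ℝ} {i j : Fin d} {c H : Set (Fin d)}

theorem measurable_xvec_apply (h : IsMPSeq X μ) (n : ℕ) (i : Fin d) :
    Measurable fun ω => xvec (X · ω) n i :=
  (measurable_pi_apply i).comp ((measurable_xvec n).comp h.iid.measurable_path)

theorem exists_mem_isFastNode (h : IsMPSeq X μ) {Γ : EReal} (hΓ : IsExponent X μ c Γ)
    (hβ : (β : EReal) < Γ) :
    ∃ j ∈ c, IsFastNode (fun n ω => mpRestrict c (X n ω)) μ β j := by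
  have := h.isProbabilityMeasure
  by_contra! hslow
  set x := fun (n : ℕ) (j : Fin d) ω => xvec (fun m => mpRestrict c (X m ω)) n j
  set E := fun (n : ℕ) (j : Fin d) => {ω | j ∈ c ∧ ((β * n : ℝ) : EReal) ≤ x n j ω}
  have hE (n : ℕ) (j : Fin d) : MeasurableSet (E n j) :=
    (MeasurableSet.const _).inter
      (measurableSet_le measurable_const ((h.restrict c).measurable_xvec_apply n j))
  have hEj (j : Fin d) : Tendsto (fun n => μ (E n j)) atTop (𝓝 0) := by
    by_cases hj : j ∈ c
    · have hCj : ∀ C : ℝ, Tendsto (fun n : ℕ => μ {ω | ((β * n - C : ℝ) : EReal) ≤ x n j ω})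
          atTop (𝓝 0) := by simpa [IsFastNode] using hslow j hj
      simpa [E, hj] using hCj 0
    · simp [E, hj]
  have hunion : Tendsto (fun n => μ (⋃ j, E n j)) atTop (𝓝 0) :=
    tendsto_of_tendsto_of_tendsto_of_le_of_le tendsto_const_nhds
      (by simpa using tendsto_finsetSum Finset.univ fun j _ => hEj j) (fun _ => zero_le)
      fun n => measure_iUnion_fintype_le μ (E n)
  have hcompl : Tendsto (fun n => μ (⋃ j, E n j)ᶜ) atTop (𝓝 0) := by
    refine tendsto_measure_zero_of_ae_eventually_notMem
      (fun n => (MeasurableSet.iUnion (hE n)).compl) ?_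
    obtain ⟨β', hββ', hβ'⟩ := EReal.lt_iff_exists_real_btwn.1 hβ
    filter_upwards [hΓ] with ω hω
    filter_upwards [eventually_ge_of_tendsto_mpScale hω hβ', eventually_gt_atTop 0]
      with n hn hpos hnot
    have hsmall : ⨆ j ∈ c, x n j ω ≤ ((β * n : ℝ) : EReal) :=
      iSup₂_le fun j hj => le_of_not_ge fun hle => hnot (Set.mem_iUnion.2 ⟨j, hj, hle⟩)
    have hle := EReal.coe_le_coe_iff.1 (hn.trans hsmall)
    exact absurd (le_of_mul_le_mul_right hle (Nat.cast_pos.2 hpos))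
      (not_le.2 (EReal.coe_lt_coe_iff.1 hββ'))
  have hone : (1 : ENNReal) ≤ 0 := by
    refine ge_of_tendsto' (add_zero (0 : ENNReal) ▸ hunion.add hcompl) fun n => ?_
    rw [measure_add_measure_compl (MeasurableSet.iUnion (hE n)), measure_univ]
  simp at hone

theorem exists_measure_neg_le_ne_zero (hij : arcRel μ (X 0) i j) :
    ∃ M : ℕ, μ {ω | ((-(M : ℝ) : ℝ) : EReal) ≤ X 0 ω i j} ≠ 0 := by
  by_contra! hnull
  refine hij (measure_mono_null (fun ω hω => ?_) (measure_iUnion_null hnull))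
  obtain ⟨a, -, ha⟩ := EReal.lt_iff_exists_real_btwn.1 (bot_lt_iff_ne_bot.2 hω)
  obtain ⟨M, hM⟩ := exists_nat_ge (-a)
  exact Set.mem_iUnion.2 ⟨M, (EReal.coe_le_coe_iff.2 (by linarith)).trans ha.le⟩

theorem isFastNode_of_arcRel (h : IsMPSeq X μ) (hij : arcRel μ (X 0) i j)
    (hj : IsFastNode X μ β j) : IsFastNode X μ β i := by
  obtain ⟨C, hC⟩ := hj
  obtain ⟨M, hM⟩ := exists_measure_neg_le_ne_zero hij
  set S : Set (MPMatrix d) := {A | ((-(M : ℝ) : ℝ) : EReal) ≤ A i j}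
  have hS : MeasurableSet S := measurableSet_le measurable_const (by fun_prop)
  set p := μ {ω | X 0 ω ∈ S}
  have hstep (n : ℕ) : p * μ {ω | ((β * n - C : ℝ) : EReal) ≤ xvec (X · ω) n j} ≤
      μ {ω | ((β * (n + 1 : ℕ) - (C + M + β) : ℝ) : EReal) ≤ xvec (X · ω) (n + 1) i} := by
    have hindep := h.iid.indepFun_of_disjoint (measurable_pi_apply n) (measurable_xvec n)
      (S := {n}) (fun f g hfg => hfg n rfl) (dependsOn_xvec n) (by simp)
    have hY : MeasurableSet {v : Fin d → EReal | ((β * n - C : ℝ) : EReal) ≤ v j} :=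
      measurableSet_le measurable_const (by fun_prop)
    refine (congrArg (· * _) (h.iid.measure_mem_eq hS n).symm).trans_le
      ((hindep.measure_inter_preimage_eq_mul S _ hS hY).symm.trans_le (measure_mono ?_))
    rintro ω ⟨hentry, hx⟩
    refine le_trans ?_ ((add_le_add hentry hx).trans (le_mpVec (X n ω) _ i j))
    rw [← EReal.coe_add, EReal.coe_le_coe_iff]
    push_cast
    linarith
  refine ⟨C + M + β, fun hi => hC ?_⟩
  have hdiv := ENNReal.Tendsto.div_const (hi.comp (tendsto_add_atTop_nat 1)) (b := p) (Or.inr hM)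
  rw [ENNReal.zero_div] at hdiv
  have := h.isProbabilityMeasure
  exact tendsto_of_tendsto_of_tendsto_of_le_of_le tendsto_const_nhds hdiv (fun _ => zero_le)
    fun n => (ENNReal.le_div_iff_mul_le (Or.inl hM) (Or.inl (measure_ne_top _ _))).2
      ((mul_comm _ _).trans_le (hstep n))

theorem isFastNode_mpRestrict (h : IsMPSeq X μ) {γ : Set (Fin d) → EReal}
    (hγ : ∀ c, IsSCC (arcRel μ (X 0)) c → IsExponent X μ c (γ c))
    (hH : Hset (arcRel μ (X 0)) γ (sccOf (arcRel μ (X 0)) i) ⊆ H)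
    (hβ : (β : EReal) < limFormula (arcRel μ (X 0)) γ i) :
    IsFastNode (fun n ω => mpRestrict H (X n ω)) μ β i := by
  set r := arcRel μ (X 0)
  obtain ⟨c, hc, ⟨k, hk, hik⟩, heq⟩ := exists_isSCC_eq_limFormula (r := r) γ i
  obtain ⟨j, hj, hfast⟩ := h.exists_mem_isFastNode (hγ c hc) (hβ.trans_eq heq.symm)
  have hmemH {a : Fin d} (hia : ReflTransGen r i a) (hac : nodeReach r a c) : a ∈ H :=
    hH ((mem_Hset_iff (isSCC_sccOf i) (mem_sccOf i)).2
      ⟨hia, (limFormula_anti hia).antisymm (heq.symm.trans_le (le_limFormula hc hac))⟩)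
  have hcreach {l : Fin d} (hl : l ∈ c) : ReflTransGen r i l := by
    obtain ⟨k₀, rfl⟩ := hc
    exact (hik.trans hk.2).trans hl.1
  have hjH : IsFastNode (fun n ω => mpRestrict H (X n ω)) μ β j :=
    hfast.mono fun n ω => mpRestrict_mono (fun l hl => hmemH (hcreach hl) ⟨l, hl, .refl⟩) _
  suffices ∀ a, ReflTransGen r a j → ReflTransGen r i a →
      IsFastNode (fun n ω => mpRestrict H (X n ω)) μ β a from this i (hcreach hj) .refl
  intro a haj
  induction haj using ReflTransGen.head_induction_on with
  | refl => exact fun _ => hjH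
  | @head a b hab hbj ih =>
    intro hia
    have hib := hia.tail hab
    refine (h.restrict H).isFastNode_of_arcRel ?_ (ih hib)
    simp only [arcRel, mpRestrict_of_mem (hmemH hia ⟨j, hj, .head hab hbj⟩)
      (hmemH hib ⟨j, hj, hbj⟩)]
    exact hab

end IsMPSeq

/-! ### Zero–one law -/

section FastPaths

variable {d : ℕ} {f : ℕ → MPMatrix d} {β : ℝ} {H : Set (Fin d)} {i k : Fin d}

/-- The sequences of matrices whose backward products satisfy `y_i(n, 0) ≥ β * n - C` for
infinitely many `n`, for some constant `C`. -/
def fastPaths (β : ℝ) (i : Fin d) : Set (ℕ → MPMatrix d) :=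
  {f | ∃ C : ℕ, ∃ᶠ n : ℕ in atTop, ((β * n - C : ℝ) : EReal) ≤ lvec n f i}

theorem measurableSet_fastPaths (β : ℝ) (i : Fin d) : MeasurableSet (fastPaths β i) := by
  simp only [fastPaths, frequently_atTop, Set.ofPred_exists, Set.ofPred_forall, Set.ofPred_and]
  exact .iUnion fun C => .iInter fun n => .iUnion fun m => (MeasurableSet.const _).inter
    (measurableSet_le measurable_const (measurable_pi_iff.1 (measurable_appProd m _) i))

theorem exists_appProd_update_ne_bot (hH : ∀ n, HasFiniteRows H (f n)) (hi : i ∈ H) (t : ℕ) :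
    ∃ k ∈ H, appProd t f (Function.update ⊥ k 0) i ≠ ⊥ := by
  induction t generalizing f i with
  | zero => exact ⟨i, hi, by simp [appProd]⟩
  | succ t ih =>
    obtain ⟨j, hj, hij⟩ := hH 0 i hi
    obtain ⟨k, hk, hjk⟩ := ih (fun n => hH (n + 1)) hj
    refine ⟨k, hk, ne_bot_of_le_ne_bot ?_ (le_mpVec (f 0) _ i j)⟩
    exact fun hbot => (EReal.add_eq_bot_iff.1 hbot).elim hij hjk

theorem mem_fastPaths_of_seqShift_mem {t : ℕ} (hk : seqShift t f ∈ fastPaths β k)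
    (hpath : appProd t f (Function.update ⊥ k 0) i ≠ ⊥) : f ∈ fastPaths β i := by
  obtain ⟨C, hC⟩ := hk
  obtain ⟨a, -, ha⟩ := EReal.lt_iff_exists_real_btwn.1 (bot_lt_iff_ne_bot.2 hpath)
  obtain ⟨C', hC'⟩ := exists_nat_ge (C + β * t - a)
  refine ⟨C', (tendsto_add_atTop_nat t).frequently (hC.mono fun n hn => ?_)⟩
  have hle (j : Fin d) : (Function.update ⊥ k 0 : Fin d → EReal) j + ((β * n - C : ℝ) : EReal) ≤
      lvec n (seqShift t f) j := by
    rcases eq_or_ne j k with rfl | hjk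
    · simpa using hn
    · simp [hjk]
  calc ((β * (n + t : ℕ) - C' : ℝ) : EReal) ≤ ((a + (β * n - C) : ℝ) : EReal) := by
        rw [EReal.coe_le_coe_iff]; push_cast; linarith
    _ ≤ appProd t f (Function.update ⊥ k 0) i + ((β * n - C : ℝ) : EReal) := by
        rw [EReal.coe_add]; exact add_le_add ha.le le_rfl
    _ ≤ appProd t f (lvec n (seqShift t f)) i :=
        appProd_add_const_le (H := Set.univ) (fun _ _ _ _ => trivial) (fun j _ => hle j) t trivial
    _ = lvec (n + t) f i := by rw [add_comm, lvec, lvec, appProd_add]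

end FastPaths

namespace IsMPSeq

variable {Ω : Type*} [MeasurableSpace Ω] {μ : Measure Ω} {d : ℕ} {X : ℕ → Ω → MPMatrix d}
  {β : ℝ} {i : Fin d} {H : Set (Fin d)}

theorem measure_fastPaths_ne_zero (h : IsMPSeq X μ) (hi : IsFastNode X μ β i) :
    μ {ω | (X · ω) ∈ fastPaths β i} ≠ 0 := by
  have := h.isProbabilityMeasure
  obtain ⟨C, hC⟩ := hi
  intro hnull
  refine hC ?_
  have hS (n : ℕ) : MeasurableSet {v : Fin d → EReal | ((β * n - C : ℝ) : EReal) ≤ v i} :=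
    measurableSet_le measurable_const (by fun_prop)
  have hlvec (n : ℕ) : Measurable fun ω => lvec n (X · ω) :=
    (measurable_appProd n _).comp h.iid.measurable_path
  refine (tendsto_congr fun n => (h.identDistrib_lvec_xvec n).measure_mem_eq (hS n)).1 ?_
  refine tendsto_measure_zero_of_ae_eventually_notMem (fun n => hlvec n (hS n)) ?_
  filter_upwards [measure_eq_zero_iff_ae_notMem.1 hnull] with ω hω
  obtain ⟨C', hC'⟩ := exists_nat_ge C
  refine (not_frequently.1 (not_exists.1 hω C')).mono fun n hn hle => hn (le_trans ?_ hle)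
  exact EReal.coe_le_coe_iff.2 (by linarith)

theorem measureReal_mul_le_of_appProd (h : IsMPSeq X μ) {t : ℕ} {B : Set (ℕ → MPMatrix d)}
    (hB : MeasurableSet B) (hBt : DependsOn (· ∈ B) (Set.Iio t)) (i k : Fin d) :
    μ.real {ω | (X · ω) ∈ B ∩ {f | appProd t f (Function.update ⊥ k 0) i ≠ ⊥}} *
      μ.real {ω | (X · ω) ∈ fastPaths β k} ≤ μ.real {ω | (X · ω) ∈ fastPaths β i ∩ B} := by
  have := h.isProbabilityMeasure
  have hpath : MeasurableSet {f : ℕ → MPMatrix d | appProd t f (Function.update ⊥ k 0) i ≠ ⊥} :=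
    measurable_pi_iff.1 (measurable_appProd t _) i (measurableSet_singleton ⊥).compl
  rw [← h.iid.measureReal_inter_shift (hB.inter hpath) (fun f g hfg => ?_)
    (measurableSet_fastPaths β k)]
  · refine measureReal_mono fun ω hω => ?_
    exact ⟨mem_fastPaths_of_seqShift_mem hω.2 hω.1.2, hω.1.1⟩
  · exact congrArg₂ And (hBt hfg)
      (congrArg (fun v : Fin d → EReal => v i ≠ ⊥) (dependsOn_appProd t _ hfg))

theorem ae_mem_fastPaths (h : IsMPSeq X μ) (hH : ∀ᵐ ω ∂μ, HasFiniteRows H (X 0 ω))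
    (hfast : ∀ i ∈ H, IsFastNode X μ β i) (hi : i ∈ H) :
    ∀ᵐ ω ∂μ, (X · ω) ∈ fastPaths β i := by
  have := h.isProbabilityMeasure
  obtain ⟨k₀, hk₀, hmin⟩ := Set.exists_min_image H
    (fun k => μ.real {ω | (X · ω) ∈ fastPaths β k}) (Set.toFinite H) ⟨i, hi⟩
  set q := μ.real {ω | (X · ω) ∈ fastPaths β k₀}
  have hq : 0 < q :=
    ENNReal.toReal_pos (h.measure_fastPaths_ne_zero (hfast k₀ hk₀)) (measure_ne_top _ _)
  have hd : (0 : ℝ) < d := Nat.cast_pos.2 i.pos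
  refine h.iid.ae_path_mem (measurableSet_fastPaths β i) (div_pos hq hd) fun t B hB hBt => ?_
  set E : Fin d → Set Ω := fun k =>
    {ω | k ∈ H ∧ (X · ω) ∈ B ∩ {f | appProd t f (Function.update ⊥ k 0) i ≠ ⊥}}
  have hcover : μ.real {ω | (X · ω) ∈ B} ≤ ∑ k, μ.real (E k) := by
    refine le_trans (ENNReal.toReal_mono (measure_ne_top _ _) (measure_mono_ae ?_))
      (measureReal_iUnion_fintype_le E)
    filter_upwards [h.ae_hasFiniteRows hH] with ω hω hωB
    obtain ⟨k, hk, hpath⟩ := exists_appProd_update_ne_bot hω hi t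
    exact Set.mem_iUnion.2 ⟨k, hk, hωB, hpath⟩
  have hterm (k : Fin d) : μ.real (E k) * q ≤ μ.real {ω | (X · ω) ∈ fastPaths β i ∩ B} := by
    by_cases hk : k ∈ H
    · calc μ.real (E k) * q ≤ μ.real (E k) * μ.real {ω | (X · ω) ∈ fastPaths β k} := by
            gcongr; exact hmin k hk
        _ ≤ _ := by simpa [E, hk] using h.measureReal_mul_le_of_appProd hB hBt i k
    · simp [E, hk]
  rw [div_mul_eq_mul_div, div_le_iff₀ hd]
  calc q * μ.real {ω | (X · ω) ∈ B} ≤ (∑ k, μ.real (E k)) * q := by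
        rw [mul_comm]; gcongr
    _ ≤ ∑ _ : Fin d, μ.real {ω | (X · ω) ∈ fastPaths β i ∩ B} := by
        rw [Finset.sum_mul]; exact Finset.sum_le_sum fun k _ => hterm k
    _ = μ.real {ω | (X · ω) ∈ fastPaths β i ∩ B} * d := by simp [mul_comm]

end IsMPSeq

/-! ### Greedy jumps -/

section Delay

variable {d : ℕ} {f : ℕ → MPMatrix d} {α β : ℝ} {H : Set (Fin d)} {L : ℕ} {i : Fin d}

/-- The sequences of matrices whose backward products grow at rate less than `β` during the first
`L` steps, from some node of `H`. -/
def stuckPaths (β : ℝ) (H : Set (Fin d)) (L : ℕ) : Set (ℕ → MPMatrix d) :=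
  {f | ∃ i ∈ H, ∀ k : ℕ, 0 < k → k ≤ L → lvec k f i < (β * k : ℝ)}

/-- A bound on what is lost with respect to growth at rate `β` when making a single step. -/
def stepLoss (β : ℝ) (f : ℕ → MPMatrix d) : ℝ := mpBound (f 0) + |β|

/-- The loss of the next jump when `m` steps remain and the jumps have length at most `L`: a single
step is made when the sequence is stuck or `m < L`, and nothing is lost otherwise. -/
def jumpLoss (β : ℝ) (H : Set (Fin d)) (L m : ℕ) (f : ℕ → MPMatrix d) : ℝ :=
  (stuckPaths β H L).indicator (stepLoss β) f + if m < L then stepLoss β f else 0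

/-- The total loss over `n` steps, if a jump started at every time. -/
def greedyLoss (β : ℝ) (H : Set (Fin d)) (L n : ℕ) (f : ℕ → MPMatrix d) : ℝ :=
  ∑ t ∈ Finset.range n, jumpLoss β H L (n - t) (seqShift t f)

theorem measurableSet_stuckPaths (β : ℝ) (H : Set (Fin d)) (L : ℕ) :
    MeasurableSet (stuckPaths β H L) := by
  simp only [stuckPaths, Set.ofPred_exists, Set.ofPred_forall, Set.ofPred_and]
  exact .iUnion fun i => (MeasurableSet.const _).inter <| .iInter fun k => .iInter fun _ =>
    .iInter fun _ => measurableSet_lt (measurable_pi_iff.1 (measurable_appProd k _) i)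
      measurable_const

theorem eventually_notMem_stuckPaths (hαβ : α < β) (hf : ∀ i ∈ H, f ∈ fastPaths β i) :
    ∀ᶠ L in atTop, f ∉ stuckPaths α H L := by
  have hjump (i : Fin d) (hi : i ∈ H) :
      ∀ᶠ L in atTop, ∃ k : ℕ, 0 < k ∧ k ≤ L ∧ ((α * k : ℝ) : EReal) ≤ lvec k f i := by
    obtain ⟨C, hC⟩ := hf i hi
    obtain ⟨k, hk, hαk, hk0⟩ := (hC.and_eventually
      ((eventually_add_le_mul hαβ C).and (eventually_gt_atTop 0))).exists
    filter_upwards [eventually_ge_atTop k] with L hL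
    exact ⟨k, hk0, hL, le_trans (EReal.coe_le_coe_iff.2 (by linarith)) hk⟩
  filter_upwards [(Set.toFinite H).eventually_all.2 hjump] with L hL
  rintro ⟨i, hi, hstuck⟩
  obtain ⟨k, hk0, hkL, hk⟩ := hL i hi
  exact (hstuck k hk0 hkL).not_ge hk

theorem stepLoss_nonneg (β : ℝ) (f : ℕ → MPMatrix d) : 0 ≤ stepLoss β f :=
  add_nonneg (mpBound_nonneg _) (abs_nonneg β)

theorem jumpLoss_nonneg (β : ℝ) (H : Set (Fin d)) (L m : ℕ) (f : ℕ → MPMatrix d) :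
    0 ≤ jumpLoss β H L m f := by
  refine add_nonneg (Set.indicator_nonneg (fun g _ => stepLoss_nonneg β g) f) ?_
  split_ifs
  exacts [stepLoss_nonneg β f, le_rfl]

theorem stepLoss_le_jumpLoss {m : ℕ} (h : m < L ∨ f ∈ stuckPaths β H L) :
    stepLoss β f ≤ jumpLoss β H L m f := by
  rcases h with h | h
  · rw [jumpLoss, if_pos h]
    exact le_add_of_nonneg_left (Set.indicator_nonneg (fun g _ => stepLoss_nonneg β g) f)
  · rw [jumpLoss, Set.indicator_of_mem h]
    refine le_add_of_nonneg_right ?_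
    split_ifs
    exacts [stepLoss_nonneg β f, le_rfl]

theorem measurable_stepLoss (β : ℝ) :
    Measurable fun f : ℕ → MPMatrix d => stepLoss β f :=
  (measurable_mpBound.comp (measurable_pi_apply (X := fun _ : ℕ => MPMatrix d) 0)).add_const |β|

theorem measurable_jumpLoss (β : ℝ) (H : Set (Fin d)) (L m : ℕ) :
    Measurable (jumpLoss β H L m) := by
  refine ((measurable_stepLoss β).indicator (measurableSet_stuckPaths β H L)).add ?_
  split_ifs
  exacts [measurable_stepLoss β, measurable_const]

theorem greedyLoss_add (β : ℝ) (H : Set (Fin d)) (L k m : ℕ) (f : ℕ → MPMatrix d) :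
    greedyLoss β H L (k + m) f =
      ∑ t ∈ Finset.range k, jumpLoss β H L (k + m - t) (seqShift t f) +
        greedyLoss β H L m (seqShift k f) := by
  simp only [greedyLoss, Finset.sum_range_add, seqShift_seqShift, Nat.add_sub_add_left,
    add_comm _ k]

theorem sub_stepLoss_le_lvec_one (β : ℝ) (h : HasFiniteRows H (f 0)) (hi : i ∈ H) :
    ((β - stepLoss β f : ℝ) : EReal) ≤ lvec 1 f i := by
  obtain ⟨j, -, hij⟩ := h i hi
  calc ((β - stepLoss β f : ℝ) : EReal) ≤ (-mpBound (f 0) : ℝ) := by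
        rw [EReal.coe_le_coe_iff, stepLoss]
        linarith [le_abs_self β]
    _ ≤ f 0 i j := neg_mpBound_le hij
    _ ≤ lvec 1 f i := by simpa [lvec, appProd] using add_lvec_le 0 f i j

-- From a node which is not stuck jump ahead at rate at least `β`, otherwise make a single step.
theorem mul_sub_greedyLoss_le_lvec (hrows : ∀ n, HasFiniteRows H (f n))
    (hH : ∀ n i j, f n i j ≠ ⊥ → j ∈ H) (n : ℕ) (hi : i ∈ H) :
    ((β * n - greedyLoss β H L n f : ℝ) : EReal) ≤ lvec n f i := by
  induction n using Nat.strong_induction_on generalizing f i with | h n ih => ?_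
  have hjump {k m : ℕ} {a : ℝ} (hk : 0 < k) (hkm : k + m = n) (ha : (a : EReal) ≤ lvec k f i) :
      ((a + (β * m - greedyLoss β H L m (seqShift k f)) : ℝ) : EReal) ≤ lvec n f i := by
    rw [EReal.coe_add, ← hkm]
    exact (add_le_add ha le_rfl).trans <| lvec_add_const_le hH (fun j hj =>
      ih m (by omega) (fun n => hrows (n + k)) (fun n => hH (n + k)) hj) hi
  rcases Nat.eq_zero_or_pos n with rfl | hn
  · simp [greedyLoss, lvec, appProd]
  by_cases hstep : n < L ∨ f ∈ stuckPaths β H L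
  · obtain ⟨m, rfl⟩ := Nat.exists_eq_add_of_le (Nat.one_le_iff_ne_zero.2 hn.ne')
    refine le_trans ?_ (hjump one_pos rfl (sub_stepLoss_le_lvec_one β (hrows 0) hi))
    have hloss := stepLoss_le_jumpLoss hstep
    have hsplit := greedyLoss_add β H L 1 m f
    rw [Finset.sum_range_one, seqShift_zero, Nat.sub_zero] at hsplit
    rw [EReal.coe_le_coe_iff]
    push_cast
    linarith
  · push Not at hstep
    obtain ⟨hLn, hfree⟩ := hstep
    simp only [stuckPaths, Set.mem_ofPred_eq] at hfree
    push Not at hfree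
    obtain ⟨k, hk0, hkL, hk⟩ := hfree i hi
    obtain ⟨m, rfl⟩ := Nat.exists_eq_add_of_le (hkL.trans hLn)
    refine le_trans ?_ (hjump hk0 rfl hk)
    have hloss : greedyLoss β H L m (seqShift k f) ≤ greedyLoss β H L (k + m) f := by
      rw [greedyLoss_add]
      exact le_add_of_nonneg_left (Finset.sum_nonneg fun t _ => jumpLoss_nonneg β H L _ _)
    rw [EReal.coe_le_coe_iff]
    push_cast
    linarith

end Delay

namespace IsMPSeq

variable {Ω : Type*} [MeasurableSpace Ω] {μ : Measure Ω} {d : ℕ} {X : ℕ → Ω → MPMatrix d}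
  {α β : ℝ} {H : Set (Fin d)}

theorem integrable_stepLoss (h : IsMPSeq X μ) (β : ℝ) :
    Integrable (fun ω => stepLoss β (X · ω)) μ := by
  have := h.isProbabilityMeasure
  exact h.integrable.add (integrable_const _)

theorem integrable_indicator_stepLoss (h : IsMPSeq X μ) (β : ℝ) (H : Set (Fin d)) (L : ℕ) :
    Integrable (fun ω => (stuckPaths β H L).indicator (stepLoss β) (X · ω)) μ :=
  (h.integrable_stepLoss β).indicator (h.iid.measurable_path (measurableSet_stuckPaths β H L))

theorem integrable_ite_stepLoss (h : IsMPSeq X μ) (β : ℝ) (L m : ℕ) :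
    Integrable (fun ω => if m < L then stepLoss β (X · ω) else 0) μ := by
  split_ifs
  exacts [h.integrable_stepLoss β, integrable_zero _ _ _]

theorem integrable_jumpLoss_shift (h : IsMPSeq X μ) (β : ℝ) (H : Set (Fin d)) (L m t : ℕ) :
    Integrable (fun ω => jumpLoss β H L m (seqShift t (X · ω))) μ :=
  ((h.iid.identDistrib_shift t).comp (measurable_jumpLoss β H L m)).integrable_iff.2 <|
    (h.integrable_indicator_stepLoss β H L).add (h.integrable_ite_stepLoss β L m)

theorem integrable_greedyLoss (h : IsMPSeq X μ) (β : ℝ) (H : Set (Fin d)) (L n : ℕ) :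
    Integrable (fun ω => greedyLoss β H L n (X · ω)) μ :=
  integrable_finsetSum _ fun t _ => h.integrable_jumpLoss_shift β H L (n - t) t

theorem integral_jumpLoss_shift (h : IsMPSeq X μ) (β : ℝ) (H : Set (Fin d)) (L m t : ℕ) :
    ∫ ω, jumpLoss β H L m (seqShift t (X · ω)) ∂μ =
      (∫ ω, (stuckPaths β H L).indicator (stepLoss β) (X · ω) ∂μ) +
        if m < L then ∫ ω, stepLoss β (X · ω) ∂μ else 0 := by
  refine ((h.iid.identDistrib_shift t).comp (measurable_jumpLoss β H L m)).integral_eq.trans <|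
    (integral_add (h.integrable_indicator_stepLoss β H L)
      (h.integrable_ite_stepLoss β L m)).trans ?_
  split_ifs <;> simp

theorem integral_greedyLoss_le (h : IsMPSeq X μ) (β : ℝ) (H : Set (Fin d)) (L n : ℕ) :
    ∫ ω, greedyLoss β H L n (X · ω) ∂μ ≤
      n * ∫ ω, (stuckPaths β H L).indicator (stepLoss β) (X · ω) ∂μ +
        L * ∫ ω, stepLoss β (X · ω) ∂μ := by
  have hloss : 0 ≤ ∫ ω, stepLoss β (X · ω) ∂μ := integral_nonneg fun ω => stepLoss_nonneg β _
  have hcard : {t ∈ Finset.range n | n - t < L}.card ≤ L := by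
    calc {t ∈ Finset.range n | n - t < L}.card ≤ (Finset.Ico (n - L) n).card :=
          Finset.card_le_card fun t ht => by
            simp only [Finset.mem_filter, Finset.mem_range, Finset.mem_Ico] at ht ⊢
            omega
      _ ≤ L := by rw [Nat.card_Ico]; omega
  simp only [greedyLoss]
  rw [integral_finsetSum _ fun t _ => h.integrable_jumpLoss_shift β H L (n - t) t,
    Finset.sum_congr rfl fun t _ => h.integral_jumpLoss_shift β H L (n - t) t,
    Finset.sum_add_distrib, ← Finset.sum_filter]
  simp only [Finset.sum_const, Finset.card_range, nsmul_eq_mul]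
  gcongr

theorem tendsto_integral_stuckPaths (h : IsMPSeq X μ) (hαβ : α < β)
    (hfast : ∀ i ∈ H, ∀ᵐ ω ∂μ, (X · ω) ∈ fastPaths β i) :
    Tendsto (fun L => ∫ ω, (stuckPaths α H L).indicator (stepLoss α) (X · ω) ∂μ) atTop (𝓝 0) := by
  rw [← integral_zero Ω ℝ (μ := μ)]
  refine tendsto_integral_of_dominated_convergence (fun ω => stepLoss α (X · ω))
    (fun L => ((measurable_stepLoss α).indicator (measurableSet_stuckPaths α H L)).comp
      h.iid.measurable_path |>.aestronglyMeasurable) (h.integrable_stepLoss α)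
    (fun L => Eventually.of_forall fun ω => ?_) ?_
  · exact (norm_indicator_le_norm_self _ _).trans_eq (Real.norm_of_nonneg (stepLoss_nonneg _ _))
  · filter_upwards [(ae_ball_iff (Set.to_countable H)).2 hfast] with ω hω
    refine tendsto_const_nhds.congr' ?_
    filter_upwards [eventually_notMem_stuckPaths hαβ hω] with L hL
    exact (Set.indicator_of_notMem hL _).symm

theorem mul_sub_integral_greedyLoss_le (h : IsMPSeq X μ) (hne : H.Nonempty)
    (hrows : ∀ᵐ ω ∂μ, HasFiniteRows H (X 0 ω)) (hH : ∀ n ω i j, X n ω i j ≠ ⊥ → j ∈ H)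
    (β : ℝ) (L n : ℕ) :
    β * n - ∫ ω, greedyLoss β H L n (X · ω) ∂μ ≤ ∫ ω, minCoord H (xvec (X · ω) n) ∂μ := by
  have := h.isProbabilityMeasure
  have hlvec := (h.identDistrib_lvec_xvec n).comp (measurable_minCoord H)
  have hint := h.integrable_greedyLoss β H L n
  calc β * n - ∫ ω, greedyLoss β H L n (X · ω) ∂μ
      = ∫ ω, β * n - greedyLoss β H L n (X · ω) ∂μ := by
        rw [integral_sub (integrable_const _) hint]; simp
    _ ≤ ∫ ω, minCoord H (lvec n (X · ω)) ∂μ := by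
        refine integral_mono_ae ((integrable_const _).sub hint)
          (hlvec.integrable_iff.2 (h.integrable_minCoord_xvec hne hrows n)) ?_
        filter_upwards [h.ae_hasFiniteRows hrows] with ω hω
        refine le_minCoord hne (b := mpBoundSum (fun k => X (natRev n k) ω) n)
          (fun i hi => mul_sub_greedyLoss_le_lvec hω (fun n => hH n ω) n hi) fun i _ => ?_
        rw [lvec_eq_xvec]
        exact xvec_le_mpBoundSum (fun k => h.ne_top _ ω) n i
    _ = ∫ ω, minCoord H (xvec (X · ω) n) ∂μ := hlvec.integral_eq

theorem exists_mul_le_integral_minCoord (h : IsMPSeq X μ) (hne : H.Nonempty)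
    (hrows : ∀ᵐ ω ∂μ, HasFiniteRows H (X 0 ω)) (hH : ∀ n ω i j, X n ω i j ≠ ⊥ → j ∈ H)
    (hαβ : α < β) (hfast : ∀ i ∈ H, ∀ᵐ ω ∂μ, (X · ω) ∈ fastPaths β i) :
    ∃ N : ℕ, 0 < N ∧ α * N ≤ ∫ ω, minCoord H (xvec (X · ω) N) ∂μ := by
  obtain ⟨α', hα, hα'⟩ := exists_between hαβ
  obtain ⟨L, hL⟩ := ((h.tendsto_integral_stuckPaths hα' hfast).eventually_lt_const
    (show 0 < (α' - α) / 2 by linarith)).exists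
  obtain ⟨N, hLN, hN⟩ := ((eventually_add_le_mul (show (0 : ℝ) < (α' - α) / 2 by linarith)
    (L * ∫ ω, stepLoss α' (X · ω) ∂μ)).and (eventually_gt_atTop 0)).exists
  refine ⟨N, hN, ?_⟩
  have hgreedy := h.mul_sub_integral_greedyLoss_le hne hrows hH α' L N
  have hloss := h.integral_greedyLoss_le α' H L N
  have hstuck := mul_le_mul_of_nonneg_left hL.le (Nat.cast_nonneg (α := ℝ) N)
  linarith

end IsMPSeq

/-! ### The lower bound -/

section LowerBound

variable {d : ℕ} {f : ℕ → MPMatrix d} {H : Set (Fin d)} {i : Fin d}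

theorem sum_minCoord_le_xvec (hf : ∀ n i j, f n i j ≠ ⊤) (hrows : ∀ n, HasFiniteRows H (f n))
    (hH : ∀ n, ∀ i ∈ H, ∀ j, f n i j ≠ ⊥ → j ∈ H) (N k : ℕ) (hi : i ∈ H) :
    ((∑ l ∈ Finset.range k, minCoord H (xvec (seqShift (l * N) f) N) : ℝ) : EReal) ≤
      xvec f (k * N) i := by
  induction k generalizing i with
  | zero => simp [xvec]
  | succ k ih =>
    have hblock : (minCoord H (xvec (seqShift (k * N) f) N) : EReal) ≤
        xvec (seqShift (k * N) f) N i :=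
      minCoord_le (fun i hi => neg_mpBoundSum_le_xvec (fun n => hrows _) N hi)
        (fun i _ => xvec_le_mpBoundSum (fun n => hf _) N i) hi
    rw [Nat.succ_mul, add_comm (k * N), Finset.sum_range_succ, EReal.coe_add,
      add_comm (Real.toEReal _)]
    exact (add_le_add hblock le_rfl).trans (le_xvec_add hH (fun j hj => ih hj) N hi)

theorem growsAtLeast_of_blocks (hf : ∀ n i j, f n i j ≠ ⊤) (hrows : ∀ n, HasFiniteRows H (f n))
    (hH : ∀ n, ∀ i ∈ H, ∀ j, f n i j ≠ ⊥ → j ∈ H) {N : ℕ} (hN : 0 < N) {β b m : ℝ}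
    (hβ : β * N < b)
    (hblocks : Tendsto (fun k : ℕ => (∑ l ∈ Finset.range k,
      minCoord H (xvec (seqShift (l * N) f) N)) / k) atTop (𝓝 b))
    (hB : Tendsto (fun n : ℕ => mpBoundSum f n / n) atTop (𝓝 m)) (hi : i ∈ H) :
    GrowsAtLeast (fun n => xvec f n i) β := by
  obtain ⟨ε, hε, hεb⟩ : ∃ ε > 0, β * N + ε < b := ⟨(b - β * N) / 2, by linarith, by linarith⟩
  obtain ⟨C₁, hsum⟩ := exists_mul_sub_le_of_tendsto_div hblocks hεb
  obtain ⟨C₂, hrest⟩ := exists_mpBoundSum_block_le hB hN hε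
  refine ⟨C₁ + C₂ + |β| * N, fun n => ?_⟩
  have hdiv := (abs_le.1 (abs_mul_sub_mul_div_le β hN n)).2
  have hmod : mpBoundSum (seqShift (n / N * N) f) (n % N) ≤
      mpBoundSum (seqShift (n / N * N) f) N := mpBoundSum_mono _ (Nat.mod_lt n hN).le
  have hsum_n := hsum (n / N)
  have hrest_n := hrest (n / N)
  calc ((β * n - (C₁ + C₂ + |β| * N) : ℝ) : EReal)
      ≤ ((-mpBoundSum (seqShift (n / N * N) f) (n % N) +
          ∑ l ∈ Finset.range (n / N), minCoord H (xvec (seqShift (l * N) f) N) : ℝ) : EReal) := by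
        rw [EReal.coe_le_coe_iff]; linarith
    _ ≤ xvec (seqShift (n / N * N) f) (n % N) i +
          ((∑ l ∈ Finset.range (n / N), minCoord H (xvec (seqShift (l * N) f) N) : ℝ) : EReal) := by
        rw [EReal.coe_add]
        exact add_le_add (neg_mpBoundSum_le_xvec (fun n => hrows _) _ hi) le_rfl
    _ ≤ xvec f n i := by
        have hjoin := le_xvec_add hH (fun j hj => sum_minCoord_le_xvec hf hrows hH N (n / N) hj)
          (n % N) hi
        rwa [Nat.mod_add_div'] at hjoin

end LowerBound

namespace IsMPSeq

variable {Ω : Type*} [MeasurableSpace Ω] {μ : Measure Ω} {d : ℕ} {X : ℕ → Ω → MPMatrix d}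
  {β : ℝ} {i : Fin d} {H : Set (Fin d)} {γ : Set (Fin d) → EReal}

theorem ae_growsAtLeast_of_isFastNode (h : IsMPSeq X μ)
    (hrows : ∀ᵐ ω ∂μ, HasFiniteRows H (X 0 ω)) (hH : ∀ n ω i j, X n ω i j ≠ ⊥ → j ∈ H)
    {β' : ℝ} (hβ : β < β') (hfast : ∀ i ∈ H, IsFastNode X μ β' i) (hi : i ∈ H) :
    ∀ᵐ ω ∂μ, GrowsAtLeast (fun n => xvec (X · ω) n i) β := by
  obtain ⟨α, hβα, hαβ'⟩ := exists_between hβ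
  obtain ⟨N, hN, hblock⟩ := h.exists_mul_le_integral_minCoord ⟨i, hi⟩ hrows hH hαβ'
    fun j hj => h.ae_mem_fastPaths hrows hfast hj
  have hβN : β * N < ∫ ω, minCoord H (xvec (X · ω) N) ∂μ :=
    (mul_lt_mul_of_pos_right hβα (Nat.cast_pos.2 hN)).trans_le hblock
  filter_upwards [h.ae_hasFiniteRows hrows, h.tendsto_mpBoundSum,
    h.iid.block_strong_law ((measurable_minCoord H).comp (measurable_xvec N))
      (fun f g hfg => congrArg (minCoord H) (dependsOn_xvec N hfg))
      (h.integrable_minCoord_xvec ⟨i, hi⟩ hrows N)] with ω hω hB hlaw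
  exact growsAtLeast_of_blocks (fun n => h.ne_top n ω) hω (fun n i _ => hH n ω i) hN hβN hlaw hB hi

theorem ae_growsAtLeast (h : IsMPSeq X μ)
    (hγ : ∀ c, IsSCC (arcRel μ (X 0)) c → IsExponent X μ c (γ c))
    (hrows : ∀ᵐ ω ∂μ, HasFiniteRows (Hset (arcRel μ (X 0)) γ (sccOf (arcRel μ (X 0)) i)) (X 0 ω))
    (hβ : (β : EReal) < limFormula (arcRel μ (X 0)) γ i) :
    ∀ᵐ ω ∂μ, GrowsAtLeast (fun n => xvec (X · ω) n i) β := by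
  set r := arcRel μ (X 0)
  set H := Hset r γ (sccOf r i)
  obtain ⟨β', hββ', hβ'⟩ := EReal.lt_iff_exists_real_btwn.1 hβ
  have hfast : ∀ k ∈ H, IsFastNode (fun n ω => mpRestrict H (X n ω)) μ β' k := by
    intro k hk
    obtain ⟨hik, hlim⟩ := (mem_Hset_iff (isSCC_sccOf i) (mem_sccOf i)).1 hk
    refine h.isFastNode_mpRestrict hγ (fun j hj => ?_) (hβ'.trans_eq hlim.symm)
    obtain ⟨hkj, hlim'⟩ := (mem_Hset_iff (isSCC_sccOf k) (mem_sccOf k)).1 hj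
    exact (mem_Hset_iff (isSCC_sccOf i) (mem_sccOf i)).2 ⟨hik.trans hkj, hlim'.trans hlim⟩
  filter_upwards [(h.restrict H).ae_growsAtLeast_of_isFastNode
    (hrows.mono fun ω hω => hω.mpRestrict) (fun n ω a b hab => (mem_of_mpRestrict_ne_bot hab).2)
    (EReal.coe_lt_coe_iff.1 hββ') hfast (self_mem_Hset i)] with ω ⟨C, hC⟩
  refine ⟨C, fun n => (hC n).trans (xvec_mono (fun n a b => ?_) n i)⟩
  simpa using mpRestrict_mono (Set.subset_univ H) (X n ω) a b

theorem ae_tendsto_mpScale_xvec (h : IsMPSeq X μ)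
    (hγ : ∀ c, IsSCC (arcRel μ (X 0)) c → IsExponent X μ c (γ c))
    (hrows : ∀ᵐ ω ∂μ,
      HasFiniteRows (Hset (arcRel μ (X 0)) γ (sccOf (arcRel μ (X 0)) i)) (X 0 ω)) :
    ∀ᵐ ω ∂μ, Tendsto (fun n => mpScale n (xvec (X · ω) n i)) atTop
      (𝓝 (limFormula (arcRel μ (X 0)) γ i)) := by
  have hupper : ∀ᵐ ω ∂μ, ∀ q : ℚ, limFormula (arcRel μ (X 0)) γ i < ((q : ℝ) : EReal) →
      GrowsAtMost (fun n => xvec (X · ω) n i) q :=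
    ae_all_iff.2 fun q => eventually_imp_distrib_left.2 (h.ae_growsAtMost hγ i)
  have hlower : ∀ᵐ ω ∂μ, ∀ q : ℚ, ((q : ℝ) : EReal) < limFormula (arcRel μ (X 0)) γ i →
      GrowsAtLeast (fun n => xvec (X · ω) n i) q :=
    ae_all_iff.2 fun q => eventually_imp_distrib_left.2 (h.ae_growsAtLeast hγ hrows)
  filter_upwards [hupper, hlower] with ω hu hl
  exact tendsto_mpScale_of_growth hu hl

end IsMPSeq

/-! ### Necessity of the condition on the rows -/

section Frequently

variable {d n : ℕ} {f : ℕ → MPMatrix d} {D : Set (Fin d)} {i : Fin d} {α : ℝ}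

theorem xvec_succ_le (hf : ∀ i j, f n i j ≠ ⊤) (hi : ∀ j, f n i j ≠ ⊥ → j ∈ D) {x : EReal}
    (hx : ∀ j ∈ D, xvec f n j ≤ x) : xvec f (n + 1) i ≤ mpBound (f n) + x := by
  refine iSup_le fun j => ?_
  by_cases hj : f n i j = ⊥
  · simp [hj]
  · exact add_le_add (le_mpBound (hf i j)) (hx j (hi j hj))

theorem limit_le_of_frequently_forall_mem (hf : ∀ n i j, f n i j ≠ ⊤)
    (hi : ∃ᶠ n in atTop, ∀ j, f n i j ≠ ⊥ → j ∈ D)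
    (hD : ∀ j ∈ D, GrowsAtMost (fun n => xvec f n j) α) {m : ℝ}
    (hB : Tendsto (fun n : ℕ => mpBoundSum f n / n) atTop (𝓝 m)) {l : EReal}
    (hl : Tendsto (fun n => mpScale n (xvec f n i)) atTop (𝓝 l)) : l ≤ α := by
  by_contra! hlt
  obtain ⟨a, hαa, hal⟩ := EReal.lt_iff_exists_real_btwn.1 hlt
  rw [EReal.coe_lt_coe_iff] at hαa
  obtain ⟨C, hC⟩ := exists_forall_le_of_growsAtMost fun j : D => hD j j.2
  obtain ⟨ε, hε, hεa⟩ : ∃ ε > 0, α + ε < a := ⟨(a - α) / 2, by linarith, by linarith⟩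
  obtain ⟨C', hC'⟩ := exists_mpBoundSum_block_le hB one_pos hε
  have hentry (n : ℕ) : mpBound (f n) ≤ ε * n + C' := by
    simpa [mpBoundSum, seqShift] using hC' n
  have hlower : ∀ᶠ n : ℕ in atTop, ((a * (n + 1 : ℕ) : ℝ) : EReal) ≤ xvec f (n + 1) i :=
    (tendsto_add_atTop_nat 1).eventually (eventually_ge_of_tendsto_mpScale hl hal)
  obtain ⟨n, hn, hge, hlarge⟩ :=
    (hi.and_eventually (hlower.and (eventually_add_le_mul hεa (C + C' + 1 - a)))).exists
  have hle := hge.trans (xvec_succ_le (hf n) hn fun j hj => hC ⟨j, hj⟩ n)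
  rw [← EReal.coe_add, EReal.coe_le_coe_iff] at hle
  push_cast at hle
  linarith [hentry n]

end Frequently

theorem measurableSet_row_mem {d : ℕ} (D : Set (Fin d)) (i : Fin d) :
    MeasurableSet {M : MPMatrix d | ∀ j, M i j ≠ ⊥ → j ∈ D} := by
  simp only [imp_iff_not_or, Set.ofPred_forall, Set.ofPred_or]
  exact MeasurableSet.iInter fun j =>
    (measurableSet_entry_ne_bot i j).compl.union (MeasurableSet.const _)

namespace IsMPSeq

variable {Ω : Type*} [MeasurableSpace Ω] {μ : Measure Ω} {d : ℕ} {X : ℕ → Ω → MPMatrix d}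
  {γ : Set (Fin d) → EReal} {i : Fin d}

theorem limFormula_le_of_ae_eventually_le (h : IsMPSeq X μ)
    (hγ : ∀ c, IsSCC (arcRel μ (X 0)) c → IsExponent X μ c (γ c)) {β : ℝ}
    (hβ : ∀ᵐ ω ∂μ, ∀ᶠ n : ℕ in atTop, xvec (X · ω) n i ≤ ((β * n : ℝ) : EReal)) :
    limFormula (arcRel μ (X 0)) γ i ≤ β := by
  have := h.isProbabilityMeasure
  by_contra! hlt
  obtain ⟨b, hβb, hb⟩ := EReal.lt_iff_exists_real_btwn.1 hlt
  rw [EReal.coe_lt_coe_iff] at hβb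
  obtain ⟨C, hC⟩ := h.isFastNode_mpRestrict hγ (Set.subset_univ _) hb
  simp only [mpRestrict_univ] at hC
  refine hC (tendsto_measure_zero_of_ae_eventually_notMem
    (fun n => measurableSet_le measurable_const (h.measurable_xvec_apply n i)) ?_)
  filter_upwards [hβ] with ω hω
  filter_upwards [hω, eventually_add_le_mul hβb (C + 1)] with n hle hlarge hge
  have hreal := EReal.coe_le_coe_iff.1 (hge.trans hle)
  linarith

theorem ae_not_row_mem (h : IsMPSeq X μ)
    (hγ : ∀ c, IsSCC (arcRel μ (X 0)) c → IsExponent X μ c (γ c))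
    (hconv : ∀ᵐ ω ∂μ, ∃ l : EReal, Tendsto (fun n => mpScale n (xvec (X · ω) n i)) atTop (𝓝 l))
    {D : Set (Fin d)} {α : ℝ} (hD : ∀ j ∈ D, limFormula (arcRel μ (X 0)) γ j < α)
    (hα : α < limFormula (arcRel μ (X 0)) γ i) :
    ∀ᵐ ω ∂μ, ¬ ∀ j, X 0 ω i j ≠ ⊥ → j ∈ D := by
  refine measure_eq_zero_iff_ae_notMem.1 ?_
  by_contra hpos
  obtain ⟨β, hαβ, hβ⟩ := EReal.lt_iff_exists_real_btwn.1 hα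
  refine hβ.not_ge (h.limFormula_le_of_ae_eventually_le hγ ?_)
  filter_upwards [h.iid.ae_frequently_mem (measurableSet_row_mem D i) hpos, h.tendsto_mpBoundSum,
    (ae_ball_iff (Set.to_countable D)).2 fun j hj => h.ae_growsAtMost hγ j (hD j hj), hconv]
    with ω hfreq hB hgrowth ⟨l, hl⟩
  have hlα := limit_le_of_frequently_forall_mem (h.ne_top · ω) hfreq hgrowth hB hl
  exact eventually_le_of_tendsto_mpScale hl (hlα.trans_lt hαβ)

theorem ae_hasFiniteRows_Hset (h : IsMPSeq X μ)
    (hγ : ∀ c, IsSCC (arcRel μ (X 0)) c → IsExponent X μ c (γ c))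
    (hrow : ∀ᵐ ω ∂μ, ∀ i, ∃ j, X 0 ω i j ≠ ⊥)
    (hconv : ∀ᵐ ω ∂μ, ∀ i, ∃ l : EReal,
      Tendsto (fun n => mpScale n (xvec (X · ω) n i)) atTop (𝓝 l))
    {c : Set (Fin d)} (hc : IsSCC (arcRel μ (X 0)) c) :
    ∀ᵐ ω ∂μ, HasFiniteRows (Hset (arcRel μ (X 0)) γ c) (X 0 ω) := by
  set r := arcRel μ (X 0)
  obtain ⟨k, hk⟩ := hc.nonempty
  refine (ae_ball_iff (Set.to_countable _)).2 fun i hi => ?_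
  obtain ⟨hki, hlim⟩ := (mem_Hset_iff hc hk).1 hi
  set D : Finset (Fin d) := (Set.toFinite {j | limFormula r γ j < limFormula r γ i}).toFinset
  have hmemD {j} : j ∈ D ↔ limFormula r γ j < limFormula r γ i := by simp [D]
  have hleave {j} (hij : r i j) (hj : j ∉ Hset r γ c) : j ∈ D :=
    hmemD.2 <| (limFormula_anti (.single hij)).lt_of_ne fun heq =>
      hj ((mem_Hset_iff hc hk).2 ⟨hki.tail hij, heq.trans hlim⟩)
  rcases eq_bot_or_bot_lt (limFormula r γ i) with hbot | hbot
  · filter_upwards [hrow, h.ae_arcRel] with ω hω harc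
    obtain ⟨j, hj⟩ := hω i
    exact ⟨j, by_contra fun hjH => by simpa [hbot] using hmemD.1 (hleave (harc 0 i j hj) hjH), hj⟩
  obtain ⟨α, hDα, hα⟩ := EReal.lt_iff_exists_real_btwn.1
    ((Finset.sup_lt_iff (f := limFormula r γ) hbot).2 fun j hj => hmemD.1 hj)
  filter_upwards [h.ae_not_row_mem (D := D) hγ (hconv.mono fun ω hω => hω i)
    (fun j hj => (Finset.le_sup hj).trans_lt hDα) hα, h.ae_arcRel] with ω hω harc
  by_contra! hrow_bot
  exact hω fun j hj => hleave (harc 0 i j hj) fun hjH => hj (hrow_bot j hjH)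

end IsMPSeq

open Classical in
/-- **Theorem (law of large numbers, independent case).**
If `(A(n))_{n∈ℕ}` are i.i.d. random `d × d` matrices over `ℝ_max`, a.s. with at least one
finite entry on each row, and `max_{A_{ij}(0) ≠ -∞} |A_{ij}(0)|` is integrable, then
`(1/n) x(n,0)` converges a.s. iff for every s.c.c. `c` of `𝒢(A)` the submatrix of `A(0)`
indexed by `H_c` a.s. has at least one finite entry on each row; in that case the limit is
`max { γ^{(c)} : i → c }` in each coordinate `i`. -/
theorem cycle_time_iid_iff
    {d : ℕ} {Ω : Type*} [MeasurableSpace Ω] (μ : Measure Ω) [IsProbabilityMeasure μ]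
    (A : ℕ → Ω → Fin d → Fin d → EReal)
    (hmeas : ∀ n, Measurable (A n))
    (hindep : iIndepFun A μ)
    (hident : ∀ n, μ.map (A n) = μ.map (A 0))
    (hnotop : ∀ n ω i j, A n ω i j ≠ ⊤)
    (hrow : ∀ n, ∀ᵐ ω ∂μ, ∀ i, ∃ j, A n ω i j ≠ ⊥)
    (hint : Integrable
      (fun ω => ⨆ i, ⨆ j, if A 0 ω i j = ⊥ then (0 : ℝ) else |(A 0 ω i j).toReal|) μ)
    (γ : Set (Fin d) → EReal)
    (hγ : ∀ c : Set (Fin d), IsSCC (arcRel μ (A 0)) c →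
      ∀ᵐ ω ∂μ, Tendsto
        (fun n => mpScale n (⨆ i, ⨆ (_ : i ∈ c), xvec (fun m => mpRestrict c (A m ω)) n i))
        atTop (𝓝 (γ c))) :
    ((∀ᵐ ω ∂μ, ∀ i, ∃ l : EReal,
        Tendsto (fun n => mpScale n (xvec (fun m => A m ω) n i)) atTop (𝓝 l)) ↔
      (∀ c : Set (Fin d), IsSCC (arcRel μ (A 0)) c →
        ∀ᵐ ω ∂μ, ∀ i ∈ Hset (arcRel μ (A 0)) γ c, ∃ j ∈ Hset (arcRel μ (A 0)) γ c,
          A 0 ω i j ≠ ⊥)) ∧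
    ((∀ c : Set (Fin d), IsSCC (arcRel μ (A 0)) c →
        ∀ᵐ ω ∂μ, ∀ i ∈ Hset (arcRel μ (A 0)) γ c, ∃ j ∈ Hset (arcRel μ (A 0)) γ c,
          A 0 ω i j ≠ ⊥) →
      ∀ᵐ ω ∂μ, ∀ i, Tendsto (fun n => mpScale n (xvec (fun m => A m ω) n i)) atTop
        (𝓝 (limFormula (arcRel μ (A 0)) γ i))) := by
  have h : IsMPSeq A μ := ⟨⟨hmeas, hindep,
    fun n => ⟨(hmeas n).aemeasurable, (hmeas 0).aemeasurable, hident n⟩⟩, hnotop, hint⟩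
  have hsuff (hH : ∀ c, IsSCC (arcRel μ (A 0)) c →
      ∀ᵐ ω ∂μ, HasFiniteRows (Hset (arcRel μ (A 0)) γ c) (A 0 ω)) :
      ∀ᵐ ω ∂μ, ∀ i, Tendsto (fun n => mpScale n (xvec (fun m => A m ω) n i)) atTop
        (𝓝 (limFormula (arcRel μ (A 0)) γ i)) :=
    ae_all_iff.2 fun i => h.ae_tendsto_mpScale_xvec hγ (hH _ (isSCC_sccOf i))
  exact ⟨⟨fun hconv c hc => h.ae_hasFiniteRows_Hset hγ (hrow 0) hconv hc,
    fun hH => (hsuff hH).mono fun ω hω i => ⟨_, hω i⟩⟩, hsuff⟩
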